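/- arXiv:2307.15512 — 3 statements merged into one kernel-verified Lean document; each statement's English description precedes it below -/
import Mathlib

section
/- Let k ≥ 2 be an integer, let 0 < ξ ≤ 1, let G be a ξ-expanding k-graph on n ≥ 20 vertices with average vertex degree d = d(G), and let j ∈ ℕ with j ≥ 2 and n^{1/(2j−1)} ≤ d ≤ (n/k)^{1/(2j−2)}. Then there exists a subset Y ⊆ V(G) with |Y| ≤ 20 · ξ^{-2} · d^{j−1} · ⌈(n/d^{2j−1}) · log n⌉ such that for every vertex v ∈ V(G) there exists an injection f : N_V^{j−1}(v) → Y with dist(x, f(x)) ≤ j for every x ∈ N_V^{j−1}(v). -/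
open scoped BigOperators

/-- A `k`-uniform hypergraph on vertex set `Fin n`. -/
structure KGraph (n k : ℕ) where
  edges : Finset (Finset (Fin n))
  uniform : ∀ e ∈ edges, e.card = k

namespace KGraph

variable {n k : ℕ}

/-- A loose path of edges from `x` to `y`: a nonempty list of edges, the first containing `x`,
the last containing `y`, with consecutive edges intersecting. -/
def IsLoosePath (G : KGraph n k) (x y : Fin n) (l : List (Finset (Fin n))) : Prop :=
  l ≠ [] ∧ (∀ e ∈ l, e ∈ G.edges) ∧ (∀ e ∈ l.head?, x ∈ e) ∧
    (∀ e ∈ l.getLast?, y ∈ e) ∧ l.Chain' (fun e f => (e ∩ f).Nonempty)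

/-- Distance between two vertices: the smallest length of a loose path between them
(`0` if they are equal, `⊤` if there is no such path). -/
noncomputable def dist (G : KGraph n k) (x y : Fin n) : ℕ∞ :=
  if x = y then 0
  else sInf ((fun l : List (Finset (Fin n)) => (l.length : ℕ∞)) '' {l | G.IsLoosePath x y l})

/-- Distance between two sets of vertices: the minimum over pairs. -/
noncomputable def setDist (G : KGraph n k) (A B : Set (Fin n)) : ℕ∞ :=
  ⨅ (x ∈ A) (y ∈ B), G.dist x y

/-- The closed `r`-th vertex-neighbourhood of a set of vertices. -/
noncomputable def vNhd (G : KGraph n k) (A : Set (Fin n)) (r : ℕ) : Set (Fin n) :=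
  {v | G.setDist A {v} ≤ (r : ℕ∞)}

/-- The set of vertices covered by a set of edges. -/
def VB (B : Set (Finset (Fin n))) : Set (Fin n) :=
  ⋃ e ∈ B, (e : Set (Fin n))

/-- The closed `r`-th vertex-neighbourhood of a set of edges. -/
noncomputable def vNhdE (G : KGraph n k) (B : Set (Finset (Fin n))) (r : ℕ) : Set (Fin n) :=
  G.vNhd (VB B) r

/-- The closed `r`-th edge-neighbourhood of a set of vertices: edges within distance `r - 1`. -/
noncomputable def eNhd (G : KGraph n k) (A : Set (Fin n)) (r : ℕ) : Set (Finset (Fin n)) :=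
  {e | e ∈ G.edges ∧ G.setDist (e : Set (Fin n)) A ≤ ((r - 1 : ℕ) : ℕ∞)}

/-- The average vertex degree of `G`. -/
noncomputable def avgDeg (G : KGraph n k) : ℝ :=
  (∑ v : Fin n, ((G.vNhd {v} 1).ncard : ℝ)) / n

/-- A `k`-graph on `n` vertices with average vertex degree `d ≥ k` is `ξ`-expanding if
(A.1) edge-neighbourhoods of vertices are not too large, (A.2) vertex-neighbourhoods of vertex
sets have size comparable to `|A| d^r`, and (A.3) vertex-neighbourhoods of edge sets are large. -/
def IsExpanding (G : KGraph n k) (ξ : ℝ) : Prop :=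
  (k : ℝ) ≤ G.avgDeg ∧
  (∀ v : Fin n, ∀ r : ℕ, 1 ≤ r → G.avgDeg ^ r ≤ Real.sqrt ((n : ℝ) * k) →
    ((G.eNhd {v} r).ncard : ℝ) ≤ ξ⁻¹ * G.avgDeg ^ r / k) ∧
  (∀ A : Set (Fin n), ∀ r : ℕ, 1 ≤ r →
    ξ * min ((A.ncard : ℝ) * G.avgDeg ^ r) (n : ℝ) ≤ ((G.vNhd A r).ncard : ℝ) ∧
    ((G.vNhd A r).ncard : ℝ) ≤ ξ⁻¹ * (A.ncard : ℝ) * G.avgDeg ^ r) ∧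
  (∀ B : Set (Finset (Fin n)), B ⊆ (G.edges : Set (Finset (Fin n))) → ∀ r : ℕ, 1 ≤ r →
    ξ * min ((B.ncard : ℝ) * k * G.avgDeg ^ r) (n : ℝ) ≤ ((G.vNhdE B r).ncard : ℝ))

/-- `CopsWin G c r` : with the cops currently on the vertices `c i`, the robber on `r`, and the
cops to move, the cops have a strategy to catch the robber. Either a cop is already on the
robber's vertex; or the cops can move (each by distance at most 1) so that a cop lands on the
robber; or the cops can move so that whatever the robber's reply, the cops still win. -/
inductive CopsWin (G : KGraph n k) {m : ℕ} : (Fin m → Fin n) → Fin n → Prop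
  | caught (c : Fin m → Fin n) (r : Fin n) (i : Fin m) (h : c i = r) : CopsWin G c r
  | stepCaught (c c' : Fin m → Fin n) (r : Fin n)
      (hmove : ∀ i, G.dist (c i) (c' i) ≤ 1) (i : Fin m) (h : c' i = r) : CopsWin G c r
  | step (c c' : Fin m → Fin n) (r : Fin n)
      (hmove : ∀ i, G.dist (c i) (c' i) ≤ 1)
      (h : ∀ r' : Fin n, G.dist r r' ≤ 1 → CopsWin G c' r') : CopsWin G c r

/-- The cop number of `G` : the least `m` such that `m` cops can be initially placed so as to
catch the robber wherever he starts. -/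
noncomputable def copNumber (G : KGraph n k) : ℕ :=
  sInf {m : ℕ | ∃ c₀ : Fin m → Fin n, ∀ r₀ : Fin n, CopsWin G c₀ r₀}

/-- `G` is connected if all pairs of vertices are at finite distance. -/
def Connected (G : KGraph n k) : Prop := ∀ x y : Fin n, G.dist x y ≠ ⊤

end KGraph

open Classical in
/-- The probability that the binomial random `k`-uniform hypergraph `G^k(n,p)` (each `k`-subset
of `[n]` an edge independently with probability `p`) satisfies the property `Q`. -/
noncomputable def ghProb (n k : ℕ) (p : ℝ) (Q : KGraph n k → Prop) : ℝ :=
  ∑ E ∈ (Finset.powersetCard k (Finset.univ : Finset (Fin n))).powerset,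
    if h : ∀ e ∈ E, e.card = k then
      (if Q ⟨E, h⟩ then
        p ^ E.card * (1 - p) ^ ((Finset.powersetCard k (Finset.univ : Finset (Fin n))).card - E.card)
      else 0)
    else 0

/-!
Call `Y` good if every nonempty `A` contained in a ball of radius `j - 1` satisfies
`#A ≤ #(Y ∩ N(A))`, where `N(A)` is the closed `j`-th neighbourhood of `A`; Hall's theorem turns
goodness into the required injections. A random `Y`, containing each vertex independently with
probability `M / (2 * n)` for the target size `M`, is good and small with positive probability. By
expansion `#(Y ∩ N(A))` has mean at least `10 * min (#A * log n) (ξ⁻¹ * d ^ (j - 1) * q)`, where `q`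
is the ceiling in the definition of `M`. If this is of order `#A * log n`, Chernoff's bound beats
the number of pairs of a centre and a set of the size of `A`. Otherwise `d ^ (2 * j - 1)` exceeds
`n`, so `d ^ (j - 1)` exceeds a multiple of `log n`, and Chernoff's bound beats the number of pairs
of a centre and an arbitrary subset of its ball, which has at most `ξ⁻¹ * d ^ (j - 1)` elements.
-/

open Finset Real

section BinomialSubset

variable {α : Type*} [Fintype α] [DecidableEq α]

/-- The expectation operator of a binomial random subset of `α`, in which every element is
present independently with probability `p`; a genuine expectation only for `0 ≤ p ≤ 1`. -/
noncomputable def binomialMean (p : ℝ) : (Finset α → ℝ) →ₗ[ℝ] ℝ :=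
  ∑ Y : Finset α, (p ^ #Y * (1 - p) ^ #Yᶜ) • LinearMap.proj Y

lemma binomialMean_apply (p : ℝ) (f : Finset α → ℝ) :
    binomialMean p f = ∑ Y : Finset α, p ^ #Y * (1 - p) ^ #Yᶜ * f Y := by
  simp [binomialMean]

lemma binomialMean_exp_mul_card_inter (p s : ℝ) (N : Finset α) :
    binomialMean p (fun Y => exp (s * #(Y ∩ N))) = (p * exp s + (1 - p)) ^ #N := by
  calc binomialMean p (fun Y => exp (s * #(Y ∩ N)))
      = ∏ i : α, (p * (if i ∈ N then exp s else 1) + (1 - p)) := by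
        rw [binomialMean_apply, prod_add, powerset_univ]
        refine sum_congr rfl fun Y _ => ?_
        rw [prod_mul_distrib, prod_const, prod_const, prod_ite_mem, prod_const,
          ← compl_eq_univ_sdiff, mul_comm s, exp_nat_mul, mul_right_comm]
    _ = ∏ i : α, if i ∈ N then p * exp s + (1 - p) else 1 :=
        prod_congr rfl fun i _ => by split_ifs <;> ring
    _ = (p * exp s + (1 - p)) ^ #N := by rw [prod_ite_mem, univ_inter, prod_const]

lemma binomialMean_exp_mul_card_inter_le {p : ℝ} (hp0 : 0 ≤ p) (hp1 : p ≤ 1) (s : ℝ)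
    (N : Finset α) :
    binomialMean p (fun Y => exp (s * #(Y ∩ N))) ≤ exp (p * #N * (exp s - 1)) := by
  have hbase : 0 ≤ p * exp s + (1 - p) := by have := exp_pos s; nlinarith
  have hexp : p * exp s + (1 - p) ≤ exp (p * (exp s - 1)) := by
    linarith [add_one_le_exp (p * (exp s - 1))]
  calc binomialMean p (fun Y => exp (s * #(Y ∩ N)))
      = (p * exp s + (1 - p)) ^ #N := binomialMean_exp_mul_card_inter p s N
    _ ≤ exp (p * (exp s - 1)) ^ #N := pow_le_pow_left₀ hbase hexp _
    _ = exp (p * #N * (exp s - 1)) := by rw [← exp_nat_mul]; ring_nf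

lemma binomialMean_const (p c : ℝ) : binomialMean p (fun _ : Finset α => c) = c := by
  have hone : binomialMean p (fun _ : Finset α => (1 : ℝ)) = 1 := by
    simpa using binomialMean_exp_mul_card_inter p 0 (∅ : Finset α)
  simpa [hone, Pi.smul_def] using (binomialMean p).map_smul c (fun _ : Finset α => (1 : ℝ))

lemma exists_lt_of_binomialMean_lt {p : ℝ} (hp0 : 0 ≤ p) (hp1 : p ≤ 1) {f : Finset α → ℝ}
    {c : ℝ} (h : binomialMean p f < c) : ∃ Y, f Y < c := by
  by_contra! hf
  refine h.not_ge ?_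
  rw [← binomialMean_const (α := α) p c, binomialMean_apply, binomialMean_apply]
  have := sub_nonneg.2 hp1
  gcongr with Y
  exact hf Y

/- The random potential `exp (#Y - M) + ∑ i ∈ I, exp (a i - #(Y ∩ N i))` has expectation below `1`,
while any failure of the conclusion makes one of its terms at least `1`. -/
lemma exists_card_lt_forall_lt_card_inter {p : ℝ} (hp0 : 0 ≤ p) (hp1 : p ≤ 1) {ι : Type*}
    (I : Finset ι) (N : ι → Finset α) (a : ι → ℝ) (M : ℝ)
    (h : exp (p * Fintype.card α * (exp 1 - 1) - M)
      + ∑ i ∈ I, exp (a i - (1 - exp (-1)) * (p * #(N i))) < 1) :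
    ∃ Y : Finset α, (#Y : ℝ) < M ∧ ∀ i ∈ I, a i < #(Y ∩ N i) := by
  let size : Finset α → ℝ := fun Y => exp (1 * #(Y ∩ univ))
  let miss : ι → Finset α → ℝ := fun i Y => exp (-1 * #(Y ∩ N i))
  have hsize : exp (-M) * binomialMean p size ≤ exp (p * Fintype.card α * (exp 1 - 1) - M) := by
    rw [sub_eq_neg_add, exp_add]
    gcongr
    exact binomialMean_exp_mul_card_inter_le hp0 hp1 1 univ
  have hmiss : ∀ i ∈ I, exp (a i) * binomialMean p (miss i)
      ≤ exp (a i - (1 - exp (-1)) * (p * #(N i))) := fun i _ => by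
    calc exp (a i) * binomialMean p (miss i)
        ≤ exp (a i) * exp (p * #(N i) * (exp (-1) - 1)) := by
          gcongr
          exact binomialMean_exp_mul_card_inter_le hp0 hp1 (-1) (N i)
      _ = exp (a i - (1 - exp (-1)) * (p * #(N i))) := by rw [← exp_add]; ring_nf
  have hmean : binomialMean p (exp (-M) • size + ∑ i ∈ I, exp (a i) • miss i) < 1 := by
    simp only [map_add, map_sum, map_smul, smul_eq_mul]
    exact (add_le_add hsize (sum_le_sum hmiss)).trans_lt h
  obtain ⟨Y, hY⟩ := exists_lt_of_binomialMean_lt hp0 hp1 hmean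
  have hpotential : exp (#Y - M) + ∑ i ∈ I, exp (a i - #(Y ∩ N i)) < 1 := by
    simpa [size, miss, ← exp_add, sub_eq_add_neg, add_comm] using hY
  have hterms : ∀ i ∈ I, 0 ≤ exp (a i - #(Y ∩ N i)) := fun i _ => (exp_pos _).le
  refine ⟨Y, ?_, fun i hi => ?_⟩
  · have : exp (#Y - M) < 1 := by linarith [sum_nonneg hterms]
    linarith [exp_lt_one_iff.1 this]
  · have : exp (a i - #(Y ∩ N i)) < 1 := by
      linarith [single_le_sum hterms hi, exp_pos (#Y - M)]
    linarith [exp_lt_one_iff.1 this]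

end BinomialSubset

section SubsetSums

variable {β : Type*} [DecidableEq β]

lemma sum_powerset_erase_empty_pow_card_le (S : Finset β) {x : ℝ} (hx : 0 ≤ x)
    (hSx : #S * x ≤ 1) : ∑ A ∈ S.powerset.erase ∅, x ^ #A ≤ 2 * (#S * x) := by
  have hbinom : ∑ A ∈ S.powerset, x ^ #A = (x + 1) ^ #S := by
    simpa using sum_pow_mul_eq_add_pow x 1 S
  have hpow : (x + 1) ^ #S ≤ exp (#S * x) := by
    rw [exp_nat_mul]
    exact pow_le_pow_left₀ (by positivity) (add_one_le_exp x) _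
  have hSx0 : 0 ≤ #S * x := by positivity
  have hexp : exp (#S * x) - 1 ≤ 2 * (#S * x) := by
    simpa only [abs_of_nonneg hSx0] using
      (le_abs_self _).trans (abs_exp_sub_one_le (x := #S * x) (by rwa [abs_of_nonneg hSx0]))
  have hsplit := sum_erase_add S.powerset (fun A => x ^ #A) (empty_mem_powerset S)
  simp only [card_empty, pow_zero, hbinom] at hsplit
  linarith

lemma exp_sub_le_inv_pow_add_exp_neg {a b : ℕ} (hab : a ≤ b) {n μ : ℝ} (hn : exp 1 ≤ n)
    (hμ : 10 * a * log n ≤ μ ∨ 4 * (b + log n) ≤ μ) :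
    exp (a - (1 - exp (-1)) * μ) ≤ (n ^ 3)⁻¹ ^ a + exp (-b) * (n ^ 2)⁻¹ := by
  have hn0 : 0 < n := (exp_pos 1).trans_le hn
  have hlog : 1 ≤ log n := (le_log_iff_exp_le hn0).2 hn
  have hab' : (a : ℝ) ≤ b := mod_cast hab
  have hinv : ∀ m : ℕ, (n ^ m)⁻¹ = exp (-(m * log n)) := fun m => by
    rw [exp_neg, exp_nat_mul, exp_log hn0]
  have he : 0.6 ≤ 1 - exp (-1) := by linarith [exp_neg_one_lt_d9]
  rw [hinv, hinv, ← exp_nat_mul, ← exp_add]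
  push_cast
  have ha : (0 : ℝ) ≤ a := a.cast_nonneg
  have hal : (a : ℝ) ≤ a * log n := le_mul_of_one_le_right ha hlog
  have hμ0 : 0 ≤ μ := by rcases hμ with h | h <;> nlinarith
  have hgain : 0.6 * μ ≤ (1 - exp (-1)) * μ := mul_le_mul_of_nonneg_right he hμ0
  rcases hμ with h | h
  · exact (exp_le_exp.2 (by linarith)).trans (le_add_of_nonneg_right (exp_pos _).le)
  · exact (exp_le_exp.2 (by linarith)).trans (le_add_of_nonneg_left (exp_pos _).le)

/- A set obeying the first bound pays for the at most `n ^ #A` sets of its size, one obeying the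
second for all `2 ^ #S` subsets. -/
lemma sum_powerset_erase_empty_exp_sub_le {S : Finset β} {n : ℝ} (hn : exp 1 ≤ n) (hS : #S ≤ n)
    {μ : Finset β → ℝ}
    (hμ : ∀ A ⊆ S, A.Nonempty → 10 * #A * log n ≤ μ A ∨ 4 * (#S + log n) ≤ μ A) :
    ∑ A ∈ S.powerset.erase ∅, exp (#A - (1 - exp (-1)) * μ A) ≤ 3 * (n ^ 2)⁻¹ := by
  have hn1 : 1 ≤ n := (one_le_exp zero_le_one).trans hn
  have hterm : ∀ A ∈ S.powerset.erase ∅, exp (#A - (1 - exp (-1)) * μ A)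
      ≤ (n ^ 3)⁻¹ ^ #A + exp (-#S) * (n ^ 2)⁻¹ := fun A hA => by
    rw [mem_erase, mem_powerset] at hA
    exact exp_sub_le_inv_pow_add_exp_neg (card_le_card hA.2) hn
      (hμ A hA.2 (nonempty_iff_ne_empty.2 hA.1))
  have hcard : #(S.powerset.erase ∅) * exp (-#S) ≤ 1 := by
    calc #(S.powerset.erase ∅) * exp (-#S) ≤ exp 1 ^ #S * exp (-#S) := by
          gcongr
          calc (#(S.powerset.erase ∅) : ℝ) ≤ 2 ^ #S := by
                exact_mod_cast card_erase_le.trans_eq (card_powerset S)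
            _ ≤ exp 1 ^ #S := by gcongr; linarith [exp_one_gt_d9]
      _ = 1 := by rw [← exp_nat_mul, mul_one, ← exp_add, add_neg_cancel, exp_zero]
  have hSn : #S * (n ^ 3)⁻¹ ≤ (n ^ 2)⁻¹ := by
    calc #S * (n ^ 3)⁻¹ ≤ n * (n ^ 3)⁻¹ := by gcongr
      _ = (n ^ 2)⁻¹ := by field_simp
  have hsmall : ∑ A ∈ S.powerset.erase ∅, (n ^ 3)⁻¹ ^ #A ≤ 2 * (#S * (n ^ 3)⁻¹) :=
    sum_powerset_erase_empty_pow_card_le S (by positivity)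
      (hSn.trans (inv_le_one_of_one_le₀ (one_le_pow₀ hn1)))
  have hlarge : ∑ _A ∈ S.powerset.erase ∅, exp (-#S) * (n ^ 2)⁻¹ ≤ (n ^ 2)⁻¹ := by
    rw [sum_const, nsmul_eq_mul, ← mul_assoc]
    exact mul_le_of_le_one_left (by positivity) hcard
  calc ∑ A ∈ S.powerset.erase ∅, exp (#A - (1 - exp (-1)) * μ A)
      ≤ ∑ A ∈ S.powerset.erase ∅, ((n ^ 3)⁻¹ ^ #A + exp (-#S) * (n ^ 2)⁻¹) := sum_le_sum hterm
    _ ≤ 3 * (n ^ 2)⁻¹ := by rw [sum_add_distrib]; linarith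

end SubsetSums

section HallSets

lemma exists_card_lt_forall_card_le_card_inter {α : Type*} [Fintype α] [DecidableEq α] {M : ℝ}
    (hM : 20 ≤ M) (hMα : M ≤ Fintype.card α) (S : α → Finset α) (F : Finset α → Finset α)
    (hF : ∀ v, ∀ A ⊆ S v, A.Nonempty →
      10 * #A * log (Fintype.card α) ≤ M / (2 * Fintype.card α) * #(F A) ∨
        4 * (#(S v) + log (Fintype.card α)) ≤ M / (2 * Fintype.card α) * #(F A)) :
    ∃ Y : Finset α, (#Y : ℝ) < M ∧ ∀ v, ∀ A ⊆ S v, #A ≤ #(Y ∩ F A) := by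
  set n : ℝ := (Fintype.card α : ℝ) with hn
  set p : ℝ := M / (2 * n) with hp
  have hn20 : 20 ≤ n := hM.trans hMα
  have hp0 : 0 ≤ p := by positivity
  have hp1 : p ≤ 1 := (div_le_one (by positivity)).2 (by linarith)
  have hpn : p * n = M / 2 := by rw [hp]; field_simp
  have hsize : exp (p * n * (exp 1 - 1) - M) ≤ 0.3 := by
    calc exp (p * n * (exp 1 - 1) - M) ≤ exp (-2.8) :=
          exp_le_exp.2 (by rw [hpn]; nlinarith [exp_one_lt_d9])
      _ ≤ 0.3 := by
          rw [exp_neg, inv_le_comm₀ (exp_pos _) (by norm_num)]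
          linarith [add_one_le_exp (2.8 : ℝ)]
  have hmiss : ∑ i ∈ univ.sigma fun v => (S v).powerset.erase ∅,
      exp (#i.2 - (1 - exp (-1)) * (p * #(F i.2))) ≤ 0.15 := by
    rw [sum_sigma]
    calc ∑ v, ∑ A ∈ (S v).powerset.erase ∅, exp (#A - (1 - exp (-1)) * (p * #(F A)))
        ≤ ∑ _v : α, 3 * (n ^ 2)⁻¹ := sum_le_sum fun v _ =>
          sum_powerset_erase_empty_exp_sub_le (by linarith [exp_one_lt_d9])
            (Nat.cast_le.2 (card_le_univ (S v))) (hF v)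
      _ = 3 / n := by rw [sum_const, card_univ, nsmul_eq_mul, ← hn]; field_simp
      _ ≤ 0.15 := by rw [div_le_iff₀ (by positivity)]; linarith
  obtain ⟨Y, hYM, hY⟩ := exists_card_lt_forall_lt_card_inter hp0 hp1
    (univ.sigma fun v => (S v).powerset.erase ∅) (fun i => F i.2) (fun i => #i.2) M
    (by linarith)
  refine ⟨Y, hYM, fun v A hA => ?_⟩
  rcases A.eq_empty_or_nonempty with rfl | hne
  · simp
  · exact_mod_cast (hY ⟨v, A⟩ (by simp [hA, hne.ne_empty])).le

lemma exists_injective_of_card_le_card_inter_biUnion {α β : Type*} [DecidableEq α] {S : Set β}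
    {Y : Finset α} {t : β → Finset α}
    (h : ∀ A : Finset β, ↑A ⊆ S → #A ≤ #(Y ∩ A.biUnion t)) :
    ∃ f : S → (Y : Set α), Function.Injective f ∧ ∀ x : S, (f x : α) ∈ t x := by
  classical
  obtain ⟨f, hf, hft⟩ := (all_card_le_biUnion_card_iff_exists_injective
    fun x : S => Y ∩ t x).1 fun A => by
      have hA := h (A.map (Function.Embedding.subtype _)) (by simp)
      rw [card_map, map_eq_image, image_biUnion, inter_biUnion] at hA
      exact hA
  exact ⟨fun x => ⟨f x, (mem_inter.1 (hft x)).1⟩,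
    fun x y hxy => hf (congrArg Subtype.val hxy), fun x => (mem_inter.1 (hft x)).2⟩

end HallSets

namespace KGraph

variable {n k : ℕ}

lemma dist_self (G : KGraph n k) (x : Fin n) : G.dist x x = 0 := if_pos rfl

/-- The closed ball of radius `r` around `x`, as a finset. -/
noncomputable def ball (G : KGraph n k) (r : ℕ) (x : Fin n) : Finset (Fin n) :=
  {y | G.dist x y ≤ r}

lemma mem_ball {G : KGraph n k} {r : ℕ} {x y : Fin n} : y ∈ G.ball r x ↔ G.dist x y ≤ r := by
  simp [ball]

lemma vNhd_coe (G : KGraph n k) (A : Finset (Fin n)) (r : ℕ) :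
    G.vNhd A r = A.biUnion (G.ball r) := by
  ext y
  simp [vNhd, setDist, mem_ball, ← ENat.lt_add_one_iff (ENat.natCast_ne_top r), iInf_lt_iff]

lemma vNhd_singleton (G : KGraph n k) (x : Fin n) (r : ℕ) : G.vNhd {x} r = G.ball r x := by
  simpa using G.vNhd_coe {x} r

end KGraph

lemma two_mul_log_le_of_le_pow_three {x y : ℝ} (hx : 0 < x) (hy : 0 < y) (h : x ≤ y ^ 3) :
    2 * log x ≤ 3 * y := by
  have hlog : log x ≤ 3 * log y := by simpa using log_le_log hx h
  have hhalf : log y - log 2 ≤ y / 2 - 1 := by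
    rw [← log_div hy.ne' two_ne_zero]
    exact log_le_sub_one_of_pos (by positivity)
  linarith [log_two_lt_d9]

lemma min_mul_log_le_mul_min {n ξ D E q a : ℝ} (hn : 0 < n) (hξ0 : 0 < ξ) (hξ1 : ξ ≤ 1) (hD : 0 < D)
    (hE : 0 < E) (ha : 0 ≤ a) (hq : n / (D * E) * log n ≤ q) (hq0 : 0 ≤ q) :
    min (10 * a * log n) (10 * (ξ⁻¹ * D) * q)
      ≤ 20 * ξ⁻¹ ^ 2 * D * q / (2 * n) * (ξ * min (a * E) n) := by
  have hlog : log n ≤ ξ⁻¹ * (q * (D * E) / n) := by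
    calc log n ≤ q * (D * E) / n := by
          rwa [le_div_iff₀ hn, mul_comm, ← div_le_iff₀ (by positivity), ← div_mul_eq_mul_div]
      _ ≤ ξ⁻¹ * (q * (D * E) / n) :=
          le_mul_of_one_le_left (by positivity) ((one_le_inv₀ hξ0).2 hξ1)
  calc min (10 * a * log n) (10 * (ξ⁻¹ * D) * q)
      ≤ min (10 * a * (ξ⁻¹ * (q * (D * E) / n))) (10 * (ξ⁻¹ * D) * q) := by gcongr
    _ = 10 * ξ⁻¹ * D * q / n * min (a * E) n := by
        rw [mul_min_of_nonneg _ _ (by positivity)]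
        congr 1 <;> field_simp
    _ = 20 * ξ⁻¹ ^ 2 * D * q / (2 * n) * (ξ * min (a * E) n) := by field_simp; ring

/- If `D * E ≤ n` then `log n ≤ q`, so `ξ⁻¹ * D * q` already dominates `a * log n`; otherwise
`n ≤ D ^ 3`, and `D` itself is at least of order `log n`. -/
lemma mul_log_le_or_add_log_le {n ξ D E q a b N : ℝ} (hn : 1 ≤ n) (hξ0 : 0 < ξ) (hξ1 : ξ ≤ 1)
    (hD : 0 < D) (hE : 0 < E) (hED : E ≤ D ^ 2) (ha : 0 ≤ a) (hab : a ≤ b) (hb : b ≤ ξ⁻¹ * D)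
    (hq : n / (D * E) * log n ≤ q) (hq1 : 1 ≤ q) (hN : ξ * min (a * E) n ≤ N) :
    10 * a * log n ≤ 20 * ξ⁻¹ ^ 2 * D * q / (2 * n) * N ∨
      4 * (b + log n) ≤ 20 * ξ⁻¹ ^ 2 * D * q / (2 * n) * N := by
  have hmin : min (10 * a * log n) (10 * (ξ⁻¹ * D) * q)
      ≤ 20 * ξ⁻¹ ^ 2 * D * q / (2 * n) * N := by
    refine (min_mul_log_le_mul_min (by positivity) hξ0 hξ1 hD hE ha hq (by positivity)).trans ?_
    gcongr
  have hlog : 0 ≤ log n := log_nonneg hn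
  rcases min_le_iff.1 hmin with h | h
  · exact .inl h
  rcases le_total (D * E) n with hDE | hDE
  · have hqlog : log n ≤ q :=
      (le_mul_of_one_le_left hlog ((one_le_div (by positivity)).2 hDE)).trans hq
    refine .inl (le_trans ?_ h)
    gcongr
    exact hab.trans hb
  · have hn3 : n ≤ D ^ 3 := by
      calc n ≤ D * E := hDE
        _ ≤ D * D ^ 2 := by gcongr
        _ = D ^ 3 := by ring
    have hDlog := two_mul_log_le_of_le_pow_three (by positivity) hD hn3
    have hDL : D ≤ ξ⁻¹ * D := le_mul_of_one_le_left hD.le ((one_le_inv₀ hξ0).2 hξ1)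
    have hLq : ξ⁻¹ * D ≤ ξ⁻¹ * D * q := le_mul_of_one_le_right (by positivity) hq1
    exact .inr (by linarith)

theorem exists_cop_set_vertex_strategy_a_general {n k : ℕ} (hn : 2 ≤ n) {ξ : ℝ} (hξ0 : 0 < ξ)
    (hξ1 : ξ ≤ 1) (G : KGraph n k) {d : ℝ} (hd : 1 ≤ d) {r s : ℕ} (hsr : s ≤ 2 * r)
    (hball : ∀ v, ((G.vNhd {v} r).ncard : ℝ) ≤ ξ⁻¹ * d ^ r)
    (hexpand : ∀ A : Set (Fin n), ξ * min (A.ncard * d ^ s) n ≤ (G.vNhd A s).ncard) :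
    ∃ Y : Finset (Fin n),
      (#Y : ℝ) ≤ 20 * ξ⁻¹ ^ 2 * d ^ r * ((⌈(n : ℝ) / d ^ (r + s) * log n⌉ : ℤ) : ℝ) ∧
      ∀ v : Fin n, ∃ f : G.vNhd {v} r → (Y : Set (Fin n)),
        Function.Injective f ∧ ∀ x, G.dist x.1 (f x).1 ≤ s := by
  have hn1 : (1 : ℝ) < n := by exact_mod_cast hn
  have hlog : 0 < log n := log_pos hn1
  set q : ℝ := ((⌈(n : ℝ) / d ^ (r + s) * log n⌉ : ℤ) : ℝ)
  have hq1 : 1 ≤ q :=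
    Int.cast_one.symm.trans_le (Int.cast_le.2 (Int.one_le_ceil_iff.2 (by positivity)))
  have hq : n / (d ^ r * d ^ s) * log n ≤ q := by rw [← pow_add]; exact Int.le_ceil _
  set M := 20 * ξ⁻¹ ^ 2 * d ^ r * q
  have hM20 : 20 ≤ M := by
    have hξ : 1 ≤ ξ⁻¹ ^ 2 := one_le_pow₀ ((one_le_inv₀ hξ0).2 hξ1)
    have := one_le_mul_of_one_le_of_one_le
      (one_le_mul_of_one_le_of_one_le hξ (one_le_pow₀ (n := r) hd)) hq1
    linarith
  rcases le_total (n : ℝ) M with hMn | hMn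
  · exact ⟨univ, by simpa using hMn, fun v => ⟨fun x => ⟨x, mem_univ _⟩,
      fun x y hxy => Subtype.ext (Subtype.mk.inj hxy), fun x => by simp [G.dist_self]⟩⟩
  simp only [G.vNhd_singleton, Set.ncard_coe_finset] at hball
  obtain ⟨Y, hYM, hY⟩ := exists_card_lt_forall_card_le_card_inter hM20 (by simpa using hMn)
    (G.ball r) (fun A => A.biUnion (G.ball s)) fun v A hA _ => by
      have hEs : d ^ s ≤ (d ^ r) ^ 2 := by
        rw [← pow_mul]
        exact pow_le_pow_right₀ hd (by omega)
      have hNhd : ξ * min (#A * d ^ s) n ≤ #(A.biUnion (G.ball s)) := by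
        simpa only [G.vNhd_coe, Set.ncard_coe_finset] using hexpand A
      rw [Fintype.card_fin]
      exact mul_log_le_or_add_log_le hn1.le hξ0 hξ1 (by positivity) (by positivity) hEs
        (by positivity) (mod_cast card_le_card hA) (hball v) hq hq1 hNhd
  refine ⟨Y, hYM.le, fun v => ?_⟩
  obtain ⟨f, hf, hfball⟩ := exists_injective_of_card_le_card_inter_biUnion fun A hA =>
    hY v A (coe_subset.1 (hA.trans (G.vNhd_singleton v r).subset))
  exact ⟨f, hf, fun x => KGraph.mem_ball.1 (hfball x)⟩

/-- vertex-strategy claim, case (a). -/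
theorem exists_cop_set_vertex_strategy_a (n k : ℕ) (hn : 20 ≤ n) (hk : 2 ≤ k)
    (ξ : ℝ) (hξ0 : 0 < ξ) (hξ1 : ξ ≤ 1)
    (G : KGraph n k) (hG : G.IsExpanding ξ) (j : ℕ) (hj : 2 ≤ j)
    (hd1 : (n : ℝ) ^ ((1 : ℝ) / (2 * (j : ℝ) - 1)) ≤ G.avgDeg)
    (hd2 : G.avgDeg ≤ ((n : ℝ) / k) ^ ((1 : ℝ) / (2 * (j : ℝ) - 2))) :
    ∃ Y : Finset (Fin n),
      (Y.card : ℝ) ≤ 20 * ξ⁻¹ ^ 2 * G.avgDeg ^ (j - 1) *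
        ((⌈(n : ℝ) / G.avgDeg ^ (2 * j - 1) * Real.log n⌉ : ℤ) : ℝ) ∧
      ∀ v : Fin n, ∃ f : G.vNhd {v} (j - 1) → (Y : Set (Fin n)),
        Function.Injective f ∧ ∀ x, G.dist x.1 (f x).1 ≤ (j : ℕ∞) := by
  have hd : 1 ≤ G.avgDeg := (Nat.one_le_cast.2 (by omega)).trans hG.1
  have hradii : j - 1 + j = 2 * j - 1 := by omega
  simpa only [hradii] using exists_cop_set_vertex_strategy_a_general (by omega) hξ0 hξ1 G hd
    (by omega : j ≤ 2 * (j - 1))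
    (fun v => by simpa using (hG.2.2.1 {v} (j - 1) (by omega)).2)
    (fun A => (hG.2.2.1 A j (by omega)).1)
end

section
/- Let k = k(n) ≥ 2 and p = p(n) > 0 be sequences such that k = ω(log n), k ≤ 2^{-11}·n, and d̂ ≤ n, where d̂ = p·k·C(n−1,k−1). Then with high probability (probability tending to 1 as n → ∞) the random hypergraph G = G^k(n,p) satisfies: for every subset B ⊆ E(G) of edges and every ε = ε(n) ∈ (0, 1/2] such that (|B|·k/n)^ε ≤ 2^{-5}, the set V_B of vertices covered by B satisfies |V_B| ≥ (1 − ε)·|B|·k. -/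
open scoped BigOperators

/-!
First moment over pairs `(b, m)`: the expected number of sets of `b` edges covering exactly `m`
vertices is at most `C(n,m) (p C(m,k))^b`, where `p C(m,k) ≤ p C(n,k) (m/n)^k ≤ 2^k (m/n)^k`.
If `m < (1 - ε)bk` and `x = bk/n` satisfies `x^ε ≤ 1/32`, then
`C(n,m) (m/n)^(bk) ≤ e^m x^(bk - m) ≤ (e/32)^(bk)`, so each of the at most `n²` relevant pairs
contributes at most `4^(-bk) ≤ 4^(-k) ≤ n^(-4)`.
-/

section Binomial

open Finset

lemma sum_Icc_pow_card_mul_pow_card_sub {α R : Type*} [DecidableEq α] [CommSemiring R] (a b : R)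
    {s t : Finset α} (hst : s ⊆ t) :
    ∑ u ∈ Icc s t, a ^ #u * b ^ (#t - #u) = a ^ #s * (a + b) ^ (#t - #s) := by
  have hdisj {u : Finset α} (hu : u ∈ (t \ s).powerset) : Disjoint s u :=
    disjoint_sdiff.mono_right (mem_powerset.mp hu)
  have hinj : Set.InjOn (s ∪ ·) ((t \ s).powerset : Set (Finset α)) := fun u hu v hv huv ↦ by
    rw [← union_sdiff_cancel_left (hdisj hu), ← union_sdiff_cancel_left (hdisj hv)]
    exact congrArg (· \ s) huv
  rw [Icc_eq_image_powerset hst, sum_image hinj, ← card_sdiff_of_subset hst,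
    ← sum_pow_mul_eq_add_pow, mul_sum]
  refine sum_congr rfl fun u hu ↦ ?_
  rw [card_union_of_disjoint (hdisj hu), card_sdiff_of_subset hst, Nat.sub_sub, pow_add, mul_assoc]

lemma add_one_le_add_one_mul_choose {n j : ℕ} (hj : 1 ≤ j) (hjn : j ≤ n) :
    n + 1 ≤ (j + 1) * n.choose j := by
  induction n generalizing j with
  | zero => omega
  | succ n ih =>
    obtain rfl | hjn' := hjn.eq_or_lt
    · simp
    · obtain ⟨i, rfl⟩ := Nat.exists_eq_add_of_le' hj
      have hpos : 0 < n.choose i := Nat.choose_pos (by omega)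
      have hih := ih hj (by omega)
      rw [Nat.choose_succ_succ']
      nlinarith

lemma descFactorial_mul_pow_le {m n : ℕ} (hmn : m ≤ n) (k : ℕ) :
    m.descFactorial k * n ^ k ≤ n.descFactorial k * m ^ k := by
  induction k with
  | zero => simp
  | succ k ih =>
    have hfactor : (m - k) * n ≤ (n - k) * m := by
      rw [Nat.sub_mul, Nat.sub_mul, Nat.mul_comm n m]
      exact Nat.sub_le_sub_left (Nat.mul_le_mul_left _ hmn) _
    calc m.descFactorial (k + 1) * n ^ (k + 1)
        = ((m - k) * n) * (m.descFactorial k * n ^ k) := by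
          rw [Nat.descFactorial_succ]; ring
      _ ≤ ((n - k) * m) * (n.descFactorial k * m ^ k) := Nat.mul_le_mul hfactor ih
      _ = n.descFactorial (k + 1) * m ^ (k + 1) := by rw [Nat.descFactorial_succ]; ring

lemma choose_le_choose_mul_div_pow {m n : ℕ} (hn : 0 < n) (hmn : m ≤ n) (k : ℕ) :
    (m.choose k : ℝ) ≤ n.choose k * ((m : ℝ) / n) ^ k := by
  have hnat : m.choose k * n ^ k ≤ n.choose k * m ^ k := by
    have hdesc := descFactorial_mul_pow_le hmn k
    rw [Nat.descFactorial_eq_factorial_mul_choose, Nat.descFactorial_eq_factorial_mul_choose,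
      mul_assoc, mul_assoc] at hdesc
    exact Nat.le_of_mul_le_mul_left hdesc k.factorial_pos
  rw [div_pow, ← mul_div_assoc, le_div_iff₀ (by positivity)]
  exact_mod_cast hnat

lemma choose_mul_div_pow_le_exp {n : ℕ} (hn : 0 < n) (m : ℕ) :
    (n.choose m : ℝ) * ((m : ℝ) / n) ^ m ≤ Real.exp m :=
  calc (n.choose m : ℝ) * ((m : ℝ) / n) ^ m
      ≤ (n : ℝ) ^ m / m.factorial * ((m : ℝ) / n) ^ m := by
        gcongr
        exact Nat.choose_le_pow_div m n
    _ = (m : ℝ) ^ m / m.factorial := by rw [div_pow]; field_simp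
    _ ≤ Real.exp m := Real.pow_div_factorial_le_exp _ m.cast_nonneg _

end Binomial

section Parameters

open Filter

variable {n k : ℕ} {p : ℝ}

lemma le_one_of_mul_choose_le (hk : 2 ≤ k) (hkn : k ≤ n)
    (hd : p * k * (n - 1).choose (k - 1) ≤ n) : p ≤ 1 := by
  have hchoose : n ≤ k * (n - 1).choose (k - 1) := by
    have h := add_one_le_add_one_mul_choose (n := n - 1) (j := k - 1) (by omega) (by omega)
    rwa [Nat.sub_add_cancel (by omega), Nat.sub_add_cancel (by omega)] at h
  have hn : (0 : ℝ) < n := by exact_mod_cast (by omega : 0 < n)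
  have hchoose' : (n : ℝ) ≤ k * (n - 1).choose (k - 1) := by exact_mod_cast hchoose
  by_contra! hp
  nlinarith

lemma mul_choose_le_sq (hp : 0 ≤ p) (hk : 1 ≤ k) (hkn : k ≤ n)
    (hd : p * k * (n - 1).choose (k - 1) ≤ n) : p * n.choose k ≤ (n : ℝ) ^ 2 := by
  have habsorb : (n : ℝ) * (n - 1).choose (k - 1) = n.choose k * k := by
    have h := Nat.add_one_mul_choose_eq (n - 1) (k - 1)
    rw [Nat.sub_add_cancel (by omega), Nat.sub_add_cancel hk] at h
    exact_mod_cast h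
  have hk' : (1 : ℝ) ≤ (k : ℝ) ^ 2 := one_le_pow₀ (by exact_mod_cast hk)
  calc p * n.choose k ≤ p * n.choose k * (k : ℝ) ^ 2 := le_mul_of_one_le_right (by positivity) hk'
    _ = p * k * (n.choose k * k) := by ring
    _ = n * (p * k * (n - 1).choose (k - 1)) := by rw [← habsorb]; ring
    _ ≤ n * n := by gcongr
    _ = (n : ℝ) ^ 2 := (sq _).symm

lemma eventually_sq_le_two_pow {k : ℕ → ℕ}
    (hk : Tendsto (fun n ↦ (k n : ℝ) / Real.log n) atTop atTop) :
    ∀ᶠ n : ℕ in atTop, (n : ℝ) ^ 2 ≤ 2 ^ k n := by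
  filter_upwards [hk.eventually_ge_atTop 4, eventually_ge_atTop 2] with n hratio hn
  have hn' : (1 : ℝ) < n := by exact_mod_cast hn
  rw [le_div_iff₀ (Real.log_pos hn')] at hratio
  rw [← Real.log_le_log_iff (by positivity) (by positivity), Real.log_pow, Real.log_pow]
  push_cast
  nlinarith [Real.log_two_gt_d9]

end Parameters

section RandomHypergraph

open Finset Filter Topology

variable {n k : ℕ} {p : ℝ} {Q R : KGraph n k → Prop}

open Classical in
lemma ghProb_eq_sum_filter :
    ghProb n k p Q =
      ∑ E ∈ (powersetCard k (univ : Finset (Fin n))).powerset with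
          ∃ h : ∀ e ∈ E, #e = k, Q ⟨E, h⟩,
        p ^ #E * (1 - p) ^ (#(powersetCard k (univ : Finset (Fin n))) - #E) := by
  rw [ghProb, sum_filter]
  refine sum_congr rfl fun E _ ↦ ?_
  by_cases h : ∀ e ∈ E, #e = k
  · rw [dif_pos h]
    exact if_congr ⟨fun hQ ↦ ⟨h, hQ⟩, fun hQ ↦ hQ.2⟩ rfl rfl
  · rw [dif_neg h, if_neg fun hQ ↦ h hQ.1]

lemma ghProb_subset_edges {B : Finset (Finset (Fin n))} (hB : B ⊆ powersetCard k univ) :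
    ghProb n k p (fun G ↦ B ⊆ G.edges) = p ^ #B := by
  have hsum := sum_Icc_pow_card_mul_pow_card_sub p (1 - p) hB
  rw [add_sub_cancel, one_pow, mul_one] at hsum
  rw [ghProb_eq_sum_filter, ← hsum]
  congr 1
  ext E
  simp only [mem_filter, mem_powerset, mem_Icc, exists_prop]
  exact ⟨fun ⟨hE, _, hBE⟩ ↦ ⟨hBE, hE⟩, fun ⟨hBE, hE⟩ ↦
    ⟨hE, fun e he ↦ (mem_powersetCard.mp (hE he)).2, hBE⟩⟩

lemma ghProb_true : ghProb n k p (fun _ ↦ True) = 1 := by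
  simpa using ghProb_subset_edges (empty_subset (powersetCard k (univ : Finset (Fin n))))

lemma ghProb_mono (hp : p ∈ Set.Icc 0 1) (hQR : ∀ G, Q G → R G) :
    ghProb n k p Q ≤ ghProb n k p R := by
  classical
  rw [ghProb_eq_sum_filter, ghProb_eq_sum_filter]
  refine sum_le_sum_of_subset_of_nonneg
    (monotone_filter_right _ fun E _ ⟨h, hQ⟩ ↦ ⟨h, hQR _ hQ⟩) fun E _ _ ↦ ?_
  exact mul_nonneg (pow_nonneg hp.1 _) (pow_nonneg (sub_nonneg.mpr hp.2) _)

lemma ghProb_le_one (hp : p ∈ Set.Icc 0 1) : ghProb n k p Q ≤ 1 :=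
  (ghProb_mono hp fun _ _ ↦ trivial).trans_eq ghProb_true

lemma tendsto_ghProb_one_mono {k : ℕ → ℕ} {p : ℕ → ℝ} {Q R : ∀ n, KGraph n (k n) → Prop}
    (hp : ∀ᶠ n in atTop, p n ∈ Set.Icc 0 1) (hQR : ∀ n G, Q n G → R n G)
    (hQ : Tendsto (fun n ↦ ghProb n (k n) (p n) (Q n)) atTop (𝓝 1)) :
    Tendsto (fun n ↦ ghProb n (k n) (p n) (R n)) atTop (𝓝 1) :=
  tendsto_of_tendsto_of_tendsto_of_le_of_le' hQ tendsto_const_nhds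
    (hp.mono fun n hpn ↦ ghProb_mono hpn (hQR n)) (hp.mono fun _ ↦ ghProb_le_one)

lemma ghProb_exists_mem_le_sum {ι : Type*} (hp : p ∈ Set.Icc 0 1) (I : Finset ι)
    (Q : ι → KGraph n k → Prop) :
    ghProb n k p (fun G ↦ ∃ i ∈ I, Q i G) ≤ ∑ i ∈ I, ghProb n k p (Q i) := by
  classical
  simp only [ghProb_eq_sum_filter, sum_filter]
  rw [sum_comm]
  refine sum_le_sum fun E _ ↦ ?_
  have hweight : 0 ≤ p ^ #E * (1 - p) ^ (#(powersetCard k (univ : Finset (Fin n))) - #E) :=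
    mul_nonneg (pow_nonneg hp.1 _) (pow_nonneg (sub_nonneg.mpr hp.2) _)
  have hterm : ∀ i ∈ I, 0 ≤ if ∃ h : ∀ e ∈ E, #e = k, Q i ⟨E, h⟩ then
      p ^ #E * (1 - p) ^ (#(powersetCard k (univ : Finset (Fin n))) - #E) else 0 := fun i _ ↦ by
    split_ifs <;> first | exact hweight | exact le_rfl
  split_ifs with hE
  · obtain ⟨h, i, hi, hQ⟩ := hE
    exact (if_pos ⟨h, hQ⟩).ge.trans (single_le_sum hterm hi)
  · exact sum_nonneg hterm

lemma ghProb_add_ghProb_not : ghProb n k p Q + ghProb n k p (fun G ↦ ¬ Q G) = 1 := by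
  rw [← ghProb_true (n := n) (k := k) (p := p)]
  simp only [ghProb_eq_sum_filter, sum_filter]
  rw [← sum_add_distrib]
  refine sum_congr rfl fun E _ ↦ ?_
  by_cases h : ∀ e ∈ E, #e = k
  · by_cases hQ : Q ⟨E, h⟩ <;> simp [hQ]
  · simp [h]

lemma ghProb_exists_edges_subset_le (hp : p ∈ Set.Icc 0 1) (b : ℕ) (V : Finset (Fin n)) :
    ghProb n k p (fun G ↦ ∃ B ⊆ G.edges, #B = b ∧ ∀ e ∈ B, e ⊆ V) ≤
      (p * (#V).choose k) ^ b := by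
  set 𝓑 := powersetCard b (powersetCard k V)
  calc ghProb n k p (fun G ↦ ∃ B ⊆ G.edges, #B = b ∧ ∀ e ∈ B, e ⊆ V)
      ≤ ghProb n k p (fun G ↦ ∃ B ∈ 𝓑, B ⊆ G.edges) := by
        refine ghProb_mono hp fun G ⟨B, hBG, hb, hV⟩ ↦ ⟨B, mem_powersetCard.mpr ⟨?_, hb⟩, hBG⟩
        exact fun e he ↦ mem_powersetCard.mpr ⟨hV e he, G.uniform e (hBG he)⟩
    _ ≤ ∑ B ∈ 𝓑, ghProb n k p (fun G ↦ B ⊆ G.edges) := ghProb_exists_mem_le_sum hp _ _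
    _ = ∑ _B ∈ 𝓑, p ^ b := sum_congr rfl fun B hB ↦ by
        obtain ⟨hBV, hb⟩ := mem_powersetCard.mp hB
        rw [ghProb_subset_edges (hBV.trans (powersetCard_mono (subset_univ V))), hb]
    _ = ((#V).choose k).choose b * p ^ b := by
        rw [sum_const, card_powersetCard, card_powersetCard, nsmul_eq_mul]
    _ ≤ (#V).choose k ^ b * p ^ b := by
        have := hp.1
        gcongr
        exact_mod_cast Nat.choose_le_pow _ _
    _ = (p * (#V).choose k) ^ b := by rw [mul_pow, mul_comm]

lemma ghProb_exists_card_biUnion_eq_le (hp : p ∈ Set.Icc 0 1) (b m : ℕ) :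
    ghProb n k p (fun G ↦ ∃ B ⊆ G.edges, #B = b ∧ #(B.biUnion id) = m) ≤
      n.choose m * (p * m.choose k) ^ b :=
  calc ghProb n k p (fun G ↦ ∃ B ⊆ G.edges, #B = b ∧ #(B.biUnion id) = m)
      ≤ ghProb n k p (fun G ↦ ∃ V ∈ powersetCard m univ,
          ∃ B ⊆ G.edges, #B = b ∧ ∀ e ∈ B, e ⊆ V) :=
        ghProb_mono hp fun G ⟨B, hBG, hb, hm⟩ ↦
          ⟨B.biUnion id, mem_powersetCard.mpr ⟨subset_univ _, hm⟩, B, hBG, hb,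
            fun _ he ↦ subset_biUnion_of_mem id he⟩
    _ ≤ ∑ V ∈ powersetCard m univ,
          ghProb n k p (fun G ↦ ∃ B ⊆ G.edges, #B = b ∧ ∀ e ∈ B, e ⊆ V) :=
        ghProb_exists_mem_le_sum hp _ _
    _ ≤ ∑ _V ∈ powersetCard m (univ : Finset (Fin n)), (p * m.choose k) ^ b :=
        sum_le_sum fun V hV ↦ (ghProb_exists_edges_subset_le hp b V).trans_eq <| by
          rw [(mem_powersetCard.mp hV).2]
    _ = n.choose m * (p * m.choose k) ^ b := by
        rw [sum_const, card_powersetCard, card_univ, Fintype.card_fin, nsmul_eq_mul]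

end RandomHypergraph

section Overlap

open Finset Filter Topology

variable {n k : ℕ} {p : ℝ}

/-- Any set `B` of edges covers at least `(1 - ε)|B|k` vertices, for every `ε > 0` such that
`(|B|k/n)^ε ≤ 2⁻⁵`. -/
def KGraph.HasSmallOverlap (G : KGraph n k) : Prop :=
  ∀ B ⊆ G.edges, ∀ ε : ℝ, 0 < ε → ((#B * k : ℝ) / n) ^ ε ≤ (2 : ℝ) ^ (-5 : ℤ) →
    (1 - ε) * #B * k ≤ (#(B.biUnion id) : ℝ)

/-- The pairs `(b, m)` for which `b` edges of size `k` covering `m` of the `n` vertices may violate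
`KGraph.HasSmallOverlap`. The parameter `ε` is eliminated: `m < (1 - ε)bk` means `εbk < bk - m`, so
that `(bk/n)^ε ≤ 1/32` yields a bound on `(bk/n)^(bk - m)`. -/
def IsOverlapPair (n k b m : ℕ) : Prop :=
  m < b * k ∧ b * k ≤ n ∧ ((b * k : ℝ) / n) ^ (b * k - m) ≤ (1 / 32 : ℝ) ^ (b * k)

lemma KGraph.exists_isOverlapPair (hn : 0 < n) {G : KGraph n k} (hG : ¬ G.HasSmallOverlap) :
    ∃ B ⊆ G.edges, IsOverlapPair n k #B #(B.biUnion id) := by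
  simp only [HasSmallOverlap, not_forall, not_le] at hG
  obtain ⟨B, hBG, ε, hε, hratio, hcover⟩ := hG
  set b := #B
  set m := #(B.biUnion id)
  have hprod : (0 : ℝ) ≤ b * k := by positivity
  have hm : (m : ℝ) < b * k := by nlinarith
  have hratio_pos : 0 < (b * k : ℝ) / n := by
    have := m.cast_nonneg.trans_lt hm
    positivity
  have hratio' : ((b * k : ℝ) / n) ^ ε ≤ 1 / 32 := hratio.trans_eq (by norm_num)
  have hratio_le : (b * k : ℝ) / n ≤ 1 := by
    by_contra! hgt
    linarith [Real.one_lt_rpow hgt hε]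
  have hm' : m < b * k := by exact_mod_cast hm
  refine ⟨B, hBG, hm', ?_, ?_⟩
  · rw [div_le_one (by positivity)] at hratio_le
    exact_mod_cast hratio_le
  · rw [← Real.rpow_natCast, ← Real.rpow_natCast (1 / 32)]
    calc ((b * k : ℝ) / n) ^ ((b * k - m : ℕ) : ℝ)
        ≤ ((b * k : ℝ) / n) ^ (ε * ((b * k : ℕ) : ℝ)) := by
          refine Real.rpow_le_rpow_of_exponent_ge hratio_pos hratio_le ?_
          rw [Nat.cast_sub hm'.le]
          push_cast
          linarith
      _ = (((b * k : ℝ) / n) ^ ε) ^ ((b * k : ℕ) : ℝ) := Real.rpow_mul hratio_pos.le _ _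
      _ ≤ (1 / 32) ^ ((b * k : ℕ) : ℝ) := by gcongr

lemma IsOverlapPair.choose_mul_pow_le {b m : ℕ} (h : IsOverlapPair n k b m) (hp : 0 ≤ p)
    (hedges : p * n.choose k ≤ 2 ^ k) :
    (n.choose m : ℝ) * (p * m.choose k) ^ b ≤ (1 / 4) ^ (b * k) := by
  obtain ⟨hm, hbk, hratio⟩ := h
  have hn : 0 < n := by omega
  have hmbk : (m : ℝ) ≤ b * k := by exact_mod_cast hm.le
  have hmk : p * m.choose k ≤ 2 ^ k * ((m : ℝ) / n) ^ k :=
    calc p * m.choose k ≤ p * (n.choose k * ((m : ℝ) / n) ^ k) := by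
          gcongr
          exact choose_le_choose_mul_div_pow hn (hm.le.trans hbk) k
      _ = p * n.choose k * ((m : ℝ) / n) ^ k := by ring
      _ ≤ 2 ^ k * ((m : ℝ) / n) ^ k := by gcongr
  have hsplit : ((m : ℝ) / n) ^ (b * k) = ((m : ℝ) / n) ^ m * ((m : ℝ) / n) ^ (b * k - m) := by
    rw [← pow_add, Nat.add_sub_cancel' hm.le]
  have hexp : Real.exp m ≤ 4 ^ (b * k) :=
    calc Real.exp m = Real.exp 1 ^ m := (Real.exp_one_pow m).symm
      _ ≤ 4 ^ m := by gcongr; linarith [Real.exp_one_lt_three]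
      _ ≤ 4 ^ (b * k) := by gcongr; norm_num
  calc (n.choose m : ℝ) * (p * m.choose k) ^ b
      ≤ n.choose m * (2 ^ k * ((m : ℝ) / n) ^ k) ^ b := by gcongr
    _ = 2 ^ (b * k) * (n.choose m * ((m : ℝ) / n) ^ (b * k)) := by ring
    _ = 2 ^ (b * k) * (n.choose m * ((m : ℝ) / n) ^ m * ((m : ℝ) / n) ^ (b * k - m)) := by
        rw [hsplit, mul_assoc]
    _ ≤ 2 ^ (b * k) * (4 ^ (b * k) * (1 / 32) ^ (b * k)) := by
        gcongr
        · exact (choose_mul_div_pow_le_exp hn m).trans hexp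
        · exact le_trans (by gcongr) hratio
    _ = (1 / 4) ^ (b * k) := by rw [← mul_pow, ← mul_pow]; norm_num

lemma IsOverlapPair.choose_mul_pow_le_inv {b m : ℕ} (h : IsOverlapPair n k b m) (hp : 0 ≤ p)
    (hnk : (n : ℝ) ^ 2 ≤ 2 ^ k) (hedges : p * n.choose k ≤ 2 ^ k) :
    (n.choose m : ℝ) * (p * m.choose k) ^ b ≤ ((n : ℝ) ^ 4)⁻¹ := by
  have hbk : 0 < b * k := m.zero_le.trans_lt h.1
  have hn : 0 < n := hbk.trans_le h.2.1
  calc (n.choose m : ℝ) * (p * m.choose k) ^ b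
      ≤ (1 / 4) ^ (b * k) := h.choose_mul_pow_le hp hedges
    _ ≤ (1 / 4) ^ k :=
        pow_le_pow_of_le_one (by norm_num) (by norm_num)
          (Nat.le_mul_of_pos_left k (Nat.pos_of_mul_pos_right hbk))
    _ = ((2 ^ k) ^ 2)⁻¹ := by rw [← pow_mul, mul_comm k, pow_mul, ← inv_pow]; norm_num
    _ ≤ (((n : ℝ) ^ 2) ^ 2)⁻¹ := by gcongr
    _ = ((n : ℝ) ^ 4)⁻¹ := by rw [← pow_mul]

lemma ghProb_not_hasSmallOverlap_le (hp : p ∈ Set.Icc 0 1) (hn : 0 < n)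
    (hnk : (n : ℝ) ^ 2 ≤ 2 ^ k) (hedges : p * n.choose k ≤ 2 ^ k) :
    ghProb n k p (fun G ↦ ¬ G.HasSmallOverlap) ≤ ((n : ℝ) ^ 2)⁻¹ := by
  classical
  set I := {q ∈ Icc 1 n ×ˢ range n | IsOverlapPair n k q.1 q.2}
  have hI {b m : ℕ} (h : IsOverlapPair n k b m) : (b, m) ∈ I := by
    have hbk : 0 < b * k := m.zero_le.trans_lt h.1
    have hb : b ≤ n := (Nat.le_mul_of_pos_right b (Nat.pos_of_mul_pos_left hbk)).trans h.2.1
    exact mem_filter.mpr ⟨mem_product.mpr ⟨mem_Icc.mpr ⟨Nat.pos_of_mul_pos_right hbk, hb⟩,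
      mem_range.mpr (h.1.trans_le h.2.1)⟩, h⟩
  have hcard : #I ≤ n * n := (card_filter_le _ _).trans_eq (by simp)
  calc ghProb n k p (fun G ↦ ¬ G.HasSmallOverlap)
      ≤ ghProb n k p (fun G ↦ ∃ q ∈ I, ∃ B ⊆ G.edges, #B = q.1 ∧ #(B.biUnion id) = q.2) :=
        ghProb_mono hp fun G hG ↦
          let ⟨B, hBG, hB⟩ := KGraph.exists_isOverlapPair hn hG
          ⟨(#B, #(B.biUnion id)), hI hB, B, hBG, rfl, rfl⟩
    _ ≤ ∑ q ∈ I, ghProb n k p (fun G ↦ ∃ B ⊆ G.edges, #B = q.1 ∧ #(B.biUnion id) = q.2) :=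
        ghProb_exists_mem_le_sum hp _ _
    _ ≤ #I • ((n : ℝ) ^ 4)⁻¹ := sum_le_card_nsmul _ _ _ fun q hq ↦
        (ghProb_exists_card_biUnion_eq_le hp q.1 q.2).trans <|
          (mem_filter.mp hq).2.choose_mul_pow_le_inv hp.1 hnk hedges
    _ ≤ (n * n : ℕ) • ((n : ℝ) ^ 4)⁻¹ := by gcongr
    _ = ((n : ℝ) ^ 2)⁻¹ := by
        rw [nsmul_eq_mul]
        push_cast
        field_simp

theorem whp_Gknp_edge_set_overlap_small_general {k : ℕ → ℕ} {p : ℕ → ℝ}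
    (hp : ∀ᶠ n in atTop, p n ∈ Set.Icc 0 1)
    (hk : ∀ᶠ n : ℕ in atTop, (n : ℝ) ^ 2 ≤ 2 ^ k n)
    (hedges : ∀ᶠ n in atTop, p n * n.choose (k n) ≤ 2 ^ k n) :
    Tendsto (fun n ↦ ghProb n (k n) (p n) KGraph.HasSmallOverlap) atTop (𝓝 1) := by
  have hlim : Tendsto (fun n : ℕ ↦ 1 - ((n : ℝ) ^ 2)⁻¹) atTop (𝓝 1) := by
    have hinv : Tendsto (fun n : ℕ ↦ ((n : ℝ) ^ 2)⁻¹) atTop (𝓝 0) :=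
      ((tendsto_pow_atTop two_ne_zero).comp tendsto_natCast_atTop_atTop).inv_tendsto_atTop
    simpa using hinv.const_sub 1
  refine tendsto_of_tendsto_of_tendsto_of_le_of_le' hlim tendsto_const_nhds ?_
    (hp.mono fun _ ↦ ghProb_le_one)
  filter_upwards [hp, hk, hedges, eventually_gt_atTop 0] with n hpn hkn hedgesn hn
  have hfail := ghProb_not_hasSmallOverlap_le hpn hn hkn hedgesn
  have htotal := ghProb_add_ghProb_not (p := p n) (Q := KGraph.HasSmallOverlap (n := n) (k := k n))
  linarith

end Overlap

/-- whp edge sets of `G^k(n,p)` have small overlap (relative version). -/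
theorem whp_Gknp_edge_set_overlap_small (k : ℕ → ℕ) (p : ℕ → ℝ)
    (hk2 : ∀ n, 2 ≤ k n) (hp : ∀ n, 0 < p n)
    (hk : Filter.Tendsto (fun n => (k n : ℝ) / Real.log n) Filter.atTop Filter.atTop)
    (hkn : ∀ᶠ n in Filter.atTop, (k n : ℝ) ≤ (2 : ℝ) ^ (-11 : ℤ) * n)
    (hdn : ∀ᶠ n in Filter.atTop,
      p n * k n * (((n - 1).choose (k n - 1) : ℕ) : ℝ) ≤ (n : ℝ)) :
    Filter.Tendsto
      (fun n => ghProb n (k n) (p n) (fun G =>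
        ∀ B : Finset (Finset (Fin n)), B ⊆ G.edges →
          ∀ ε : ℝ, 0 < ε → ε ≤ 1 / 2 →
            ((B.card * k n : ℝ) / n) ^ ε ≤ (2 : ℝ) ^ (-5 : ℤ) →
            (1 - ε) * B.card * k n ≤ ((B.biUnion id).card : ℝ)))
      Filter.atTop (nhds 1) := by
  have hpow := eventually_sq_le_two_pow hk
  have hkle : ∀ᶠ n in Filter.atTop, k n ≤ n := hkn.mono fun n hn ↦ by
    exact_mod_cast hn.trans (mul_le_of_le_one_left n.cast_nonneg (by norm_num))
  have hprob : ∀ᶠ n in Filter.atTop, p n ∈ Set.Icc 0 1 := by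
    filter_upwards [hkle, hdn] with n hkn hdn
    exact ⟨(hp n).le, le_one_of_mul_choose_le (hk2 n) hkn hdn⟩
  have hedges : ∀ᶠ n in Filter.atTop, p n * n.choose (k n) ≤ 2 ^ k n := by
    filter_upwards [hkle, hdn, hpow] with n hkn hdn hpow
    exact (mul_choose_le_sq (hp n).le (one_le_two.trans (hk2 n)) hkn hdn).trans hpow
  exact tendsto_ghProb_one_mono hprob (fun _ _ hG B hB ε hε _ ↦ hG B hB ε hε)
    (whp_Gknp_edge_set_overlap_small_general hprob hpow hedges)
end

section
/- Let k = k(n) ≥ 2 and p = p(n) > 0 be sequences such that d̂/k = ω(log³ n), k = ω(log n), and d̂ ≤ n, where d̂ = p·k·C(n−1,k−1). Then with high probability (probability tending to 1 as n → ∞) the random hypergraph G = G^k(n,p) satisfies: for every subset A ⊆ V(G) and every ε = ε(n) ∈ (0, 1/2] such that (|A|·d̂/n)^ε ≤ 2^{-6}, (1 − ε)·(1 − δ)·|A|·d̂ ≤ |N_V^1(A)| ≤ (1 + δ)·|A|·d̂, where δ = √(log log n)/log n. -/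
open scoped BigOperators

/-!
Write `d = p * C(n-1,k-1)`. By Chernoff's bound, with high probability all degrees are at most
`(1 + δ)d`, which gives the upper bound, and every nonempty `A` with `|A|kd ≤ n` meets at least
`(1 - δ)|A|d` edges. If the closed neighbourhood `T` of `A` were too small, all of these edges would
lie inside `T`. At most a `C(|T|-1,k-1) / C(n-1,k-1) ≤ (|T|/n)^(k-1)` fraction of the potential
edges at a vertex does, and since `k ≥ log n` the resulting large-deviation estimate beats the
number of choices for both `A` and `T`.
-/

open Finset MeasureTheory ProbabilityTheory Filter
open scoped unitInterval

/-! ### Binomial coefficients -/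

section

variable {m n : ℕ}

lemma choose_mul_add_pow_le (h : m ≤ n) (c j : ℕ) :
    m.choose j * (n + c) ^ j ≤ n.choose j * (m + c) ^ j := by
  suffices H : m.descFactorial j * (n + c) ^ j ≤ n.descFactorial j * (m + c) ^ j by
    rw [Nat.descFactorial_eq_factorial_mul_choose, Nat.descFactorial_eq_factorial_mul_choose,
      mul_assoc, mul_assoc] at H
    exact le_of_mul_le_mul_left H j.factorial_pos
  induction j with
  | zero => simp
  | succ j ih =>
    have hstep : (m - j) * (n + c) ≤ (n - j) * (m + c) := by
      obtain hj | hj := le_total m j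
      · simp [Nat.sub_eq_zero_of_le hj]
      · zify [hj, hj.trans h]
        zify at h
        nlinarith [mul_nonneg (sub_nonneg.2 h) (show (0 : ℤ) ≤ j + c by positivity)]
    calc m.descFactorial (j + 1) * (n + c) ^ (j + 1)
        = ((m - j) * (n + c)) * (m.descFactorial j * (n + c) ^ j) := by
          rw [Nat.descFactorial_succ]; ring
      _ ≤ ((n - j) * (m + c)) * (n.descFactorial j * (m + c) ^ j) := Nat.mul_le_mul hstep ih
      _ = n.descFactorial (j + 1) * (m + c) ^ (j + 1) := by rw [Nat.descFactorial_succ]; ring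

lemma choose_succ_add_mul_choose_le (m a j : ℕ) :
    m.choose (j + 1) + a * m.choose j ≤ (m + a).choose (j + 1) := by
  induction a with
  | zero => simp
  | succ a ih =>
    rw [← add_assoc, Nat.choose_succ_succ', add_one_mul]
    have := Nat.choose_le_choose j (Nat.le_add_right m a)
    omega

lemma choose_succ_le_add_mul_choose (m b j : ℕ) :
    (m + b).choose (j + 1) ≤ m.choose (j + 1) + b * (m + b - 1).choose j := by
  induction b with
  | zero => simp
  | succ b ih =>
    rw [← add_assoc, Nat.choose_succ_succ', add_tsub_cancel_right, add_one_mul]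
    have := Nat.mul_le_mul_left b (Nat.choose_le_choose j (Nat.sub_le (m + b) 1))
    omega

lemma one_sub_mul_choose_le {b : ℕ} (h : b ≤ m) (j : ℕ) :
    (1 - b * j / m : ℝ) * m.choose j ≤ (m - b).choose j := by
  obtain rfl | hm := m.eq_zero_or_pos
  · simp
  cases j with
  | zero => simp
  | succ j =>
    have hdrop := choose_succ_le_add_mul_choose (m - b) b j
    have habsorb := Nat.add_one_mul_choose_eq (m - 1) j
    rw [Nat.sub_add_cancel h] at hdrop
    rw [Nat.sub_add_cancel hm] at habsorb
    have : (b * (j + 1 : ℕ) / m : ℝ) * m.choose (j + 1) = b * (m - 1).choose j := by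
      rify at habsorb
      field_simp
      push_cast
      linear_combination -(b : ℝ) * habsorb
    rw [sub_mul, one_mul, this, sub_le_iff_le_add]
    exact_mod_cast hdrop

lemma sub_lt_choose {j : ℕ} (hj : j ≠ 0) (hjm : j ≤ m) : m - j < m.choose j := by
  induction m, hjm using Nat.le_induction with
  | base => simp
  | succ m hjm ih =>
    obtain ⟨i, rfl⟩ := Nat.exists_eq_succ_of_ne_zero hj
    have := Nat.choose_pos (show i ≤ m by omega)
    rw [Nat.choose_succ_succ]
    omega

lemma le_mul_choose_sub_one {k : ℕ} (hk : 2 ≤ k) (hkn : k ≤ n) :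
    n ≤ k * (n - 1).choose (k - 1) := by
  have h := sub_lt_choose (show k - 1 ≠ 0 by omega) (show k - 1 ≤ n - 1 by omega)
  obtain ⟨d, rfl⟩ := Nat.exists_eq_add_of_le hkn
  nlinarith [show d + 1 ≤ (k + d - 1).choose (k - 1) by omega]

lemma choose_le_exp (n t : ℕ) : (n.choose t : ℝ) ≤ Real.exp (t + t * Real.log (n / t)) := by
  obtain rfl | ht := t.eq_zero_or_pos
  · simp
  obtain rfl | hn := n.eq_zero_or_pos
  · simp [Nat.choose_eq_zero_of_lt ht, Real.exp_nonneg]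
  calc (n.choose t : ℝ) ≤ n ^ t / t.factorial := Nat.choose_le_pow_div t n
    _ = t ^ t / t.factorial * (n / t) ^ t := by rw [div_pow]; field_simp
    _ ≤ Real.exp t * (n / t) ^ t := by
      gcongr
      exact Real.pow_div_factorial_le_exp _ t.cast_nonneg t
    _ = Real.exp (t + t * Real.log (n / t)) := by
      rw [Real.exp_add, Real.exp_nat_mul _ t, Real.exp_log (by positivity)]

end

/-! ### First neighbourhoods and the edges meeting a set -/

section

variable {α : Type*} [DecidableEq α]

/-- The `k`-element subsets of `T` that meet `A`: the potential edges inside `T` of a `k`-graph that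
touch `A`. -/
def meetingSets (k : ℕ) (A T : Finset α) : Finset (Finset α) :=
  {e ∈ powersetCard k T | ¬ Disjoint e A}

lemma mem_meetingSets {k : ℕ} {A T e : Finset α} :
    e ∈ meetingSets k A T ↔ (e ⊆ T ∧ #e = k) ∧ ∃ x ∈ A, x ∈ e := by
  simp only [meetingSets, mem_filter, mem_powersetCard, not_disjoint_iff, and_comm (a := _ ∈ e)]

lemma meetingSets_subset [Fintype α] (k : ℕ) (A T : Finset α) :
    meetingSets k A T ⊆ powersetCard k univ :=
  (filter_subset _ _).trans (powersetCard_mono (subset_univ T))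

lemma card_meetingSets_le {k : ℕ} (hk : k ≠ 0) (A T : Finset α) :
    #(meetingSets k A T) ≤ #A * (#T - 1).choose (k - 1) := by
  have hcover : meetingSets k A T ⊆ A.biUnion fun v ↦ {e ∈ powersetCard k T | {v} ⊆ e} := by
    intro e he
    obtain ⟨he, v, hv, hve⟩ := mem_meetingSets.1 he
    exact mem_biUnion.2 ⟨v, hv, mem_filter.2 ⟨mem_powersetCard.2 he, singleton_subset_iff.2 hve⟩⟩
  refine (card_le_card hcover).trans (card_biUnion_le_card_mul _ _ _ fun v _ ↦ ?_)
  by_cases hv : v ∈ T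
  · rw [card_filter_powersetCard_subset _ _ _ (singleton_subset_iff.2 hv)
      (by rw [card_singleton]; omega), card_singleton]
  · rw [filter_false_of_mem fun e he hve ↦
      hv ((mem_powersetCard.1 he).1 (singleton_subset_iff.1 hve)), card_empty]
    exact Nat.zero_le _

lemma le_card_meetingSets_univ [Fintype α] {k : ℕ} (hk : k ≠ 0) (A : Finset α) :
    #A * (Fintype.card α - #A).choose (k - 1) ≤ #(meetingSets k A univ) := by
  obtain ⟨j, rfl⟩ := Nat.exists_eq_succ_of_ne_zero hk
  have hsdiff :
      meetingSets (j + 1) A univ = powersetCard (j + 1) univ \ powersetCard (j + 1) Aᶜ := by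
    ext e
    simp only [meetingSets, mem_filter, Finset.mem_sdiff, mem_powersetCard,
      subset_compl_iff_disjoint_right]
    tauto
  rw [Nat.succ_eq_add_one, hsdiff, card_sdiff_of_subset (powersetCard_mono (subset_univ _)),
    card_powersetCard, card_powersetCard, card_compl, card_univ]
  have := choose_succ_add_mul_choose_le (Fintype.card α - #A) (#A) j
  rw [Nat.sub_add_cancel (card_le_univ A)] at this
  rw [add_tsub_cancel_right]
  omega

end

lemma four_le_mul_log_inv {x ε : ℝ} (hx : 0 < x) (h : x ^ ε ≤ 2 ^ (-6 : ℤ)) :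
    4 ≤ ε * Real.log x⁻¹ := by
  have := Real.log_le_log (Real.rpow_pos_of_pos hx ε) h
  rw [Real.log_rpow hx, Real.log_zpow] at this
  rw [Real.log_inv]
  push_cast at this
  linarith [Real.log_two_gt_d9]

lemma mul_log_div_le_of_rpow_le {n t x δ ε : ℝ} (hn : 0 < n) (ht : 0 < t) (hx : 0 < x)
    (hδ : 0 ≤ δ) (hδ₁ : δ ≤ 1) (hε : 0 < ε) (hxε : (x / n) ^ ε ≤ 2 ^ (-6 : ℤ))
    (htx : t ≤ (1 - ε) * (1 - δ) * x) :
    t * Real.log (n / t) ≤ (Real.log (n / t) - 4) * ((1 - δ) * x) := by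
  have hlog : 4 ≤ ε * Real.log (n / x) := by
    simpa using four_le_mul_log_inv (div_pos hx hn) hxε
  have htx' : t ≤ x := htx.trans (mul_le_of_le_one_left hx.le (by nlinarith))
  have hmono : Real.log (n / x) ≤ Real.log (n / t) := by gcongr
  have hpos : 0 < Real.log (n / t) := by nlinarith
  calc t * Real.log (n / t)
      ≤ (1 - ε) * (1 - δ) * x * Real.log (n / t) := by gcongr
    _ = (Real.log (n / t) - ε * Real.log (n / t)) * ((1 - δ) * x) := by ring
    _ ≤ (Real.log (n / t) - 4) * ((1 - δ) * x) := by
        gcongr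
        exact hlog.trans (by gcongr)

namespace KGraph

variable {n k : ℕ} {G : KGraph n k} {A : Finset (Fin n)}

lemma dist_le_one_iff {x y : Fin n} :
    G.dist x y ≤ 1 ↔ x = y ∨ ∃ e ∈ G.edges, x ∈ e ∧ y ∈ e := by
  obtain rfl | hxy := eq_or_ne x y
  · simp [dist]
  simp only [dist, hxy, if_false, false_or]
  constructor
  · intro h
    have h₂ := h.trans_lt (show (1 : ℕ∞) < 2 by norm_num)
    obtain ⟨_, ⟨l, ⟨hne, hl, hx, hy, -⟩, rfl⟩, (hlen : (l.length : ℕ∞) < 2)⟩ := sInf_lt_iff.1 h₂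
    obtain ⟨e, rfl⟩ : ∃ e, l = [e] := by
      have : l.length < 2 := by exact_mod_cast hlen
      have := List.length_pos_iff.2 hne
      exact List.length_eq_one_iff.1 (by omega)
    exact ⟨e, hl e (by simp), hx e (by simp), hy e (by simp)⟩
  · rintro ⟨e, he, hx, hy⟩
    exact sInf_le ⟨[e], ⟨by simp, by simpa, by simpa, by simpa, List.isChain_singleton e⟩, by simp⟩

lemma mem_vNhd_one {A : Set (Fin n)} {v : Fin n} :
    v ∈ G.vNhd A 1 ↔ ∃ x ∈ A, x = v ∨ ∃ e ∈ G.edges, x ∈ e ∧ v ∈ e := by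
  simp only [← dist_le_one_iff, vNhd, setDist, Set.mem_ofPred_eq, Set.mem_singleton_iff,
    iInf_iInf_eq_left, Nat.cast_one]
  rw [← ENat.lt_add_one_iff ENat.one_ne_top]
  simp only [iInf_lt_iff]
  simp only [ENat.lt_add_one_iff ENat.one_ne_top, exists_prop]

lemma subset_vNhd_one (A : Set (Fin n)) : A ⊆ G.vNhd A 1 :=
  fun v hv ↦ mem_vNhd_one.2 ⟨v, hv, .inl rfl⟩

lemma ncard_vNhd_singleton_one_le (v : Fin n) :
    (G.vNhd {v} 1).ncard ≤ 1 + #(G.edges ∩ meetingSets k {v} univ) * (k - 1) := by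
  have hcover : G.vNhd {v} 1 ⊆
      ↑({v} ∪ (G.edges ∩ meetingSets k {v} univ).biUnion fun e ↦ e.erase v) := by
    intro w hw
    obtain ⟨x, rfl, rfl | ⟨e, he, hxe, hwe⟩⟩ := mem_vNhd_one.1 hw
    · simp
    · by_cases hwx : w = x
      · simp [hwx]
      have hmeet : e ∈ meetingSets k {x} univ :=
        mem_meetingSets.2 ⟨⟨subset_univ e, G.uniform e he⟩, x, mem_singleton_self x, hxe⟩
      exact mem_union_right _ (mem_biUnion.2 ⟨e, mem_inter.2 ⟨he, hmeet⟩, mem_erase.2 ⟨hwx, hwe⟩⟩)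
  refine (Set.ncard_le_ncard hcover (finite_toSet _)).trans ?_
  rw [Set.ncard_coe_finset]
  refine (card_union_le _ _).trans (add_le_add_right (card_biUnion_le_card_mul _ _ _ ?_) _)
  intro e he
  obtain ⟨⟨-, hcard⟩, x, hx, hxe⟩ := mem_meetingSets.1 (mem_inter.1 he).2
  rw [← mem_singleton.1 hx, card_erase_of_mem hxe, hcard]

lemma ncard_vNhd_one_le (hk : 1 ≤ k) {D : ℝ} (hD : 1 ≤ D)
    (hdeg : ∀ v, #(G.edges ∩ meetingSets k {v} univ) ≤ D) (A : Finset (Fin n)) :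
    (G.vNhd ↑A 1).ncard ≤ #A * (k * D) := by
  have hunion : G.vNhd ↑A 1 = ⋃ v ∈ A, G.vNhd {v} 1 := by
    ext w
    simp [mem_vNhd_one]
  have hsingle (v : Fin n) : ((G.vNhd {v} 1).ncard : ℝ) ≤ k * D := by
    calc ((G.vNhd {v} 1).ncard : ℝ)
        ≤ 1 + #(G.edges ∩ meetingSets k {v} univ) * (k - 1) := by
          have := ncard_vNhd_singleton_one_le (G := G) v
          rify [hk] at this
          exact this
      _ ≤ D + D * (k - 1) := by
          have : (1 : ℝ) ≤ k := by exact_mod_cast hk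
          gcongr
          exact hdeg v
      _ = k * D := by ring
  calc ((G.vNhd ↑A 1).ncard : ℝ) ≤ ∑ v ∈ A, ((G.vNhd {v} 1).ncard : ℝ) := by
        rw [hunion]
        exact_mod_cast set_ncard_biUnion_le A _
    _ ≤ ∑ _ ∈ A, k * D := sum_le_sum fun v _ ↦ hsingle v
    _ = #A * (k * D) := by rw [sum_const, nsmul_eq_mul]

lemma edges_inter_meetingSets_univ_subset {T : Finset (Fin n)} (hT : G.vNhd ↑A 1 ⊆ ↑T) :
    G.edges ∩ meetingSets k A univ ⊆ G.edges ∩ meetingSets k A T := by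
  intro e he
  obtain ⟨he, hmeet⟩ := mem_inter.1 he
  obtain ⟨⟨-, hcard⟩, x, hx, hxe⟩ := mem_meetingSets.1 hmeet
  have heT : e ⊆ T := fun w hw ↦ hT (mem_vNhd_one.2 ⟨x, hx, .inr ⟨e, he, hxe, hw⟩⟩)
  exact mem_inter.2 ⟨he, mem_meetingSets.2 ⟨⟨heT, hcard⟩, x, hx, hxe⟩⟩

/-- The properties of `G^k(n,p)`, with expected degree `d`, from which the sizes of first
neighbourhoods are read off: no degree exceeds `(1 + δ)d`, at least `(1 - δ)|A|d` edges meet a set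
`A` with `|A|kd ≤ n`, and fewer than that many edges meeting `A` lie inside a set `T` which is
appreciably smaller than `(1 - δ)|A|kd`. Here `|T| ≤ (1 - 4 / log(n/|T|))(1 - δ)|A|kd` is written
without the division. -/
structure IsTypical (G : KGraph n k) (δ d : ℝ) : Prop where
  degree_le (v : Fin n) : #(G.edges ∩ meetingSets k {v} univ) ≤ (1 + δ) * d
  le_meeting (A : Finset (Fin n)) : A.Nonempty → #A * (k * d) ≤ n →
    (1 - δ) * (#A * d) ≤ #(G.edges ∩ meetingSets k A univ)
  meeting_lt (A T : Finset (Fin n)) : A.Nonempty → T.Nonempty →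
    #T * Real.log (n / #T) ≤ (Real.log (n / #T) - 4) * (k * ((1 - δ) * (#A * d))) →
    #(G.edges ∩ meetingSets k A T) < (1 - δ) * (#A * d)

namespace IsTypical

variable {δ d : ℝ}

lemma ncard_vNhd_one_le (hG : G.IsTypical δ d) (hk : 1 ≤ k) (hd : 1 ≤ (1 + δ) * d)
    (A : Finset (Fin n)) : (G.vNhd ↑A 1).ncard ≤ (1 + δ) * #A * (k * d) :=
  (KGraph.ncard_vNhd_one_le hk hd hG.degree_le A).trans_eq (by ring)

lemma le_ncard_vNhd_one (hG : G.IsTypical δ d) (hδ : 0 ≤ δ) (hδ₁ : δ ≤ 1) (hk : 0 < k) (hd : 0 < d)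
    {ε : ℝ} (hε : 0 < ε) (hA : (#A * (k * d) / n) ^ ε ≤ (2 : ℝ) ^ (-6 : ℤ)) :
    (1 - ε) * (1 - δ) * #A * (k * d) ≤ (G.vNhd ↑A 1).ncard := by
  obtain rfl | hne := A.eq_empty_or_nonempty
  · simp
  obtain ⟨T, hT⟩ := (Set.toFinite (G.vNhd ↑A 1)).exists_finset_coe
  have hTne : T.Nonempty := hne.mono (by rw [← coe_subset, hT]; exact subset_vNhd_one _)
  have ha : (0 : ℝ) < #A := by exact_mod_cast hne.card_pos
  have ht : (0 : ℝ) < #T := by exact_mod_cast hTne.card_pos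
  have hn : (0 : ℝ) < n := by
    exact_mod_cast hTne.card_pos.trans_le ((card_le_univ T).trans_eq (Fintype.card_fin n))
  have hx : 0 < #A * (k * d) := by positivity
  have hcard : #A * (k * d) ≤ n := by
    have hlog := four_le_mul_log_inv (div_pos hx hn) hA
    rw [inv_div] at hlog
    by_contra! hgt
    nlinarith [Real.log_nonpos (by positivity) ((div_le_one hx).2 hgt.le)]
  by_contra! hlt
  rw [← hT, Set.ncard_coe_finset] at hlt
  have hsmall :
      #T * Real.log (n / #T) ≤ (Real.log (n / #T) - 4) * (k * ((1 - δ) * (#A * d))) :=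
    (mul_log_div_le_of_rpow_le hn ht hx hδ hδ₁ hε hA (hlt.le.trans_eq (by ring))).trans_eq (by ring)
  have hsub := card_le_card (edges_inter_meetingSets_univ_subset hT.ge)
  have : (#(G.edges ∩ meetingSets k A univ) : ℝ) ≤ #(G.edges ∩ meetingSets k A T) := mod_cast hsub
  linarith [hG.le_meeting A hne hcard, hG.meeting_lt A T hne hTne hsmall]

end IsTypical

end KGraph

/-! ### Chernoff bounds and union bounds -/

section

variable {ι : Type*} {u : Set ι} {p : I} {F : Finset ι}

lemma ncard_inter_eq_sum_indicator (F : Finset ι) (s : Set ι) :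
    ((↑F ∩ s : Set ι).ncard : ℝ) = ∑ i ∈ F, s.indicator 1 i := by
  classical
  have : (↑F ∩ s : Set ι) = ↑({i ∈ F | i ∈ s} : Finset ι) := by ext; simp
  rw [this, Set.ncard_coe_finset, Finset.card_filter]
  push_cast
  rfl

lemma measurable_ncard_inter (F : Finset ι) :
    Measurable fun s : Set ι ↦ ((↑F ∩ s).ncard : ℝ) := by
  simp_rw [ncard_inter_eq_sum_indicator]
  refine Finset.measurable_sum _ fun i _ ↦ ?_
  exact measurable_one.indicator (measurableSet_setOfPred.2 (measurable_set_mem i))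

lemma mgf_ncard_inter_setBernoulli (hF : ↑F ⊆ u) (t : ℝ) :
    mgf (fun s : Set ι ↦ ((↑F ∩ s).ncard : ℝ)) setBer(u, p) t
      = (1 - p + p * Real.exp t) ^ #F := by
  classical
  let ν (i : ι) : Measure Prop :=
    unitInterval.toNNReal p • Measure.dirac (i ∈ u) +
      unitInterval.toNNReal (σ p) • Measure.dirac False
  let χ (q : Prop) : ℝ := if q then 1 else 0
  have indep : iIndepFun (fun i (ω : ι → Prop) ↦ χ (ω i)) (Measure.infinitePi ν) :=
    iIndepFun_infinitePi fun _ ↦ Measurable.of_discrete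
  have meas (i : ι) : Measurable fun ω : ι → Prop ↦ χ (ω i) :=
    (Measurable.of_discrete (f := χ)).comp (measurable_pi_apply i)
  have mgf_eval (i) (hi : i ∈ F) :
      mgf (fun ω : ι → Prop ↦ χ (ω i)) (Measure.infinitePi ν) t = 1 - p + p * Real.exp t := by
    have hpres := measurePreserving_eval_infinitePi ν i
    change mgf (χ ∘ Function.eval (β := fun _ : ι ↦ Prop) i) _ t = _
    rw [← mgf_map hpres.measurable.aemeasurable Measurable.of_discrete.aestronglyMeasurable,
      hpres.map_eq, mgf, integral_add_measure .of_finite .of_finite]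
    simp [χ, hF hi, NNReal.smul_def, add_comm]
  rw [setBernoulli_eq_map, mgf_map (by fun_prop)
    ((measurable_ncard_inter F).const_mul t).exp.aestronglyMeasurable]
  calc _ = mgf (∑ i ∈ F, fun ω : ι → Prop ↦ χ (ω i)) (Measure.infinitePi ν) t := by
        congr 1
        ext ω
        simp [ncard_inter_eq_sum_indicator, χ, Set.indicator]
    _ = _ := by rw [indep.mgf_sum meas, Finset.prod_congr rfl mgf_eval, Finset.prod_const]

lemma integrable_exp_mul_ncard_inter_setBernoulli (F : Finset ι) (t : ℝ) :
    Integrable (fun s : Set ι ↦ Real.exp (t * (↑F ∩ s).ncard)) setBer(u, p) := by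
  refine integrable_exp_mul_of_mem_Icc (a := 0) (b := #F)
    (measurable_ncard_inter F).aemeasurable (.of_forall fun s ↦ ⟨by positivity, ?_⟩)
  rw [← Set.ncard_coe_finset]
  exact_mod_cast Set.ncard_le_ncard Set.inter_subset_left F.finite_toSet

lemma mgf_ncard_inter_setBernoulli_le (hF : ↑F ⊆ u) (t : ℝ) :
    mgf (fun s : Set ι ↦ ((↑F ∩ s).ncard : ℝ)) setBer(u, p) t
      ≤ Real.exp (#F * p * (Real.exp t - 1)) := by
  have hp := p.2.2
  rw [mgf_ncard_inter_setBernoulli hF, mul_assoc, Real.exp_nat_mul]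
  gcongr
  · nlinarith [p.2.1, Real.exp_pos t]
  · linarith [Real.add_one_le_exp (p * (Real.exp t - 1))]

lemma setBernoulli_real_le_ncard_inter_le (hF : ↑F ⊆ u) {t : ℝ} (ht : 0 ≤ t) (x : ℝ) :
    setBer(u, p).real {s | x ≤ (↑F ∩ s).ncard} ≤ Real.exp (#F * p * (Real.exp t - 1) - t * x) := by
  refine (measure_ge_le_exp_mul_mgf x ht (integrable_exp_mul_ncard_inter_setBernoulli F t)).trans ?_
  rw [sub_eq_neg_add, Real.exp_add, neg_mul]
  gcongr
  exact mgf_ncard_inter_setBernoulli_le hF t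

lemma setBernoulli_real_ncard_inter_le_le (hF : ↑F ⊆ u) {t : ℝ} (ht : t ≤ 0) (x : ℝ) :
    setBer(u, p).real {s | (↑F ∩ s).ncard ≤ x} ≤ Real.exp (#F * p * (Real.exp t - 1) - t * x) := by
  refine (measure_le_le_exp_mul_mgf x ht (integrable_exp_mul_ncard_inter_setBernoulli F t)).trans ?_
  rw [sub_eq_neg_add, Real.exp_add, neg_mul]
  gcongr
  exact mgf_ncard_inter_setBernoulli_le hF t

lemma setBernoulli_real_upper_tail_le (hF : ↑F ⊆ u) {μ δ : ℝ} (hμ : #F * (p : ℝ) ≤ μ)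
    (hδ : 0 ≤ δ) :
    setBer(u, p).real {s | (1 + δ) * μ ≤ (↑F ∩ s).ncard} ≤ Real.exp (-(δ ^ 2 * μ / (2 + δ))) := by
  have hμ₀ : 0 ≤ μ := hμ.trans' (mul_nonneg (Nat.cast_nonneg _) p.2.1)
  refine (setBernoulli_real_le_ncard_inter_le hF (Real.log_nonneg (le_add_of_nonneg_right hδ))
    _).trans (Real.exp_le_exp.2 ?_)
  rw [Real.exp_log (by positivity), add_sub_cancel_left]
  have hlog : 2 * δ / (δ + 2) ≤ Real.log (1 + δ) := Real.le_log_one_add_of_nonneg hδ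
  calc #F * (p : ℝ) * δ - Real.log (1 + δ) * ((1 + δ) * μ)
      ≤ μ * δ - 2 * δ / (δ + 2) * ((1 + δ) * μ) := by gcongr
    _ = -(δ ^ 2 * μ / (2 + δ)) := by field_simp; ring

lemma setBernoulli_real_lower_tail_le (hF : ↑F ⊆ u) {μ δ : ℝ} (hμ₀ : 0 ≤ μ) (hμ : μ ≤ #F * (p : ℝ))
    (hδ : 0 ≤ δ) :
    setBer(u, p).real {s | (↑F ∩ s).ncard ≤ (1 - δ) * μ} ≤ Real.exp (-(δ ^ 2 * μ / 2)) := by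
  refine (setBernoulli_real_ncard_inter_le_le hF (neg_nonpos.2 hδ) _).trans
    (Real.exp_le_exp.2 ?_)
  have hexp : Real.exp (-δ) - 1 ≤ -δ + δ ^ 2 / 2 := by
    have h := Real.quadratic_le_exp_of_nonneg hδ
    rw [Real.exp_neg, sub_le_iff_le_add, inv_le_iff_one_le_mul₀' (by positivity)]
    have hpos : 0 ≤ -δ + δ ^ 2 / 2 + 1 := by nlinarith [sq_nonneg (δ - 1)]
    nlinarith [mul_le_mul_of_nonneg_right h hpos, sq_nonneg (δ ^ 2)]
  have hneg : Real.exp (-δ) - 1 ≤ 0 := by simpa using hδ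
  calc #F * (p : ℝ) * (Real.exp (-δ) - 1) - -δ * ((1 - δ) * μ)
      ≤ μ * (Real.exp (-δ) - 1) - -δ * ((1 - δ) * μ) := by
        gcongr ?_ - _
        exact mul_le_mul_of_nonpos_right hμ hneg
    _ ≤ μ * (-δ + δ ^ 2 / 2) - -δ * ((1 - δ) * μ) := by gcongr
    _ = -(δ ^ 2 * μ / 2) := by ring

end

lemma measureReal_exists_nonempty_le {Ω V : Type*} [MeasurableSpace Ω] {μ : Measure Ω} [Fintype V]
    {B : Finset V → Set Ω} {c : ℝ} (hc : 0 ≤ c)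
    (hB : ∀ A, A.Nonempty →
      μ.real (B A) ≤ c / (Fintype.card V * (Fintype.card V).choose #A)) :
    μ.real {ω | ∃ A : Finset V, A.Nonempty ∧ ω ∈ B A} ≤ c := by
  set n := Fintype.card V
  have hunion : {ω | ∃ A : Finset V, A.Nonempty ∧ ω ∈ B A}
      = ⋃ A ∈ ({A | A.Nonempty} : Finset (Finset V)), B A := by
    ext; simp
  calc μ.real {ω | ∃ A : Finset V, A.Nonempty ∧ ω ∈ B A}
      ≤ ∑ A : Finset V with A.Nonempty, μ.real (B A) :=
        hunion ▸ measureReal_biUnion_finset_le _ _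
    _ ≤ ∑ A : Finset V with A.Nonempty, c / (n * n.choose #A) :=
        sum_le_sum fun A hA ↦ hB A (mem_filter.1 hA).2
    _ = ∑ A ∈ (univ : Finset V).powerset, if #A = 0 then 0 else c / (n * n.choose #A) := by
        rw [powerset_univ, sum_filter]
        refine sum_congr rfl fun A _ ↦ ?_
        simp only [← card_pos, Nat.pos_iff_ne_zero, ite_not]
    _ = ∑ a ∈ range n, n.choose (a + 1) * (c / (n * n.choose (a + 1))) := by
        rw [sum_powerset_apply_card fun a ↦ if a = 0 then 0 else c / (n * n.choose a : ℝ),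
          card_univ, sum_range_succ']
        simp [n]
    _ ≤ ∑ _ ∈ range n, c / n := by
        refine sum_le_sum fun a ha ↦ le_of_eq ?_
        have : (n.choose (a + 1) : ℝ) ≠ 0 := by
          exact_mod_cast (Nat.choose_pos (mem_range.1 ha)).ne'
        field_simp
    _ ≤ c := by
        rw [sum_const, card_range, nsmul_eq_mul]
        obtain hn | hn := n.eq_zero_or_pos
        · simpa [hn] using hc
        · exact (mul_div_cancel₀ c (by positivity)).le

/-! ### The binomial random hypergraph -/

open Classical in
lemma setBernoulli_real_eq_sum_powerset {ι : Type*} [Countable ι] (U : Finset ι) (p : I)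
    (S : Set (Set ι)) :
    setBer((U : Set ι), p).real S
      = ∑ E ∈ U.powerset with ↑E ∈ S, (p : ℝ) ^ #E * (1 - p) ^ (#U - #E) := by
  have hS : {s ∈ S | s ⊆ U} = ⋃ E ∈ {E ∈ U.powerset | ↑E ∈ S}, {(E : Set ι)} := by
    ext s
    simp only [Set.mem_ofPred_eq, Set.mem_iUnion, mem_filter, mem_powerset, Set.mem_singleton_iff,
      exists_prop]
    constructor
    · rintro ⟨hs, hsU⟩
      lift s to Finset ι using U.finite_toSet.subset hsU
      exact ⟨s, ⟨mod_cast hsU, hs⟩, rfl⟩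
    · rintro ⟨E, ⟨hEU, hE⟩, rfl⟩
      exact ⟨hE, mod_cast hEU⟩
  rw [measureReal_def, setBernoulli_apply_eq_apply_subsets, ← measureReal_def, hS,
    measureReal_biUnion_finset]
  · refine sum_congr rfl fun E hE ↦ ?_
    have hEU : E ⊆ U := mem_powerset.1 (mem_filter.1 hE).1
    rw [setBernoulli_real_singleton _ (mod_cast hEU) U.finite_toSet, ← coe_sdiff,
      Set.ncard_coe_finset, Set.ncard_coe_finset, card_sdiff_of_subset hEU]
  · exact fun E _ E' _ hne ↦ Set.disjoint_singleton.2 (mod_cast hne)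
  · measurability

namespace KGraph

variable {n k : ℕ} {p : I}

instance : MeasurableSpace (KGraph n k) := ⊤

instance : DiscreteMeasurableSpace (KGraph n k) := ⟨fun _ ↦ trivial⟩

open Classical in
/-- The `k`-graph whose edges are the `k`-element sets in `S`. -/
noncomputable def ofEdgeSet (n k : ℕ) (S : Set (Finset (Fin n))) : KGraph n k where
  edges := {e ∈ powersetCard k univ | e ∈ S}
  uniform _ he := (mem_powersetCard.1 (mem_filter.1 he).1).2

lemma measurable_ofEdgeSet : Measurable (ofEdgeSet n k) := .of_discrete

/-- The binomial random `k`-graph `G^k(n,p)`, as a measure on `k`-graphs in parallel to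
`SimpleGraph.binomialRandom`. -/
noncomputable def binomialRandom (n k : ℕ) (p : I) : Measure (KGraph n k) :=
  setBer((powersetCard k univ : Finset (Finset (Fin n))), p).map (ofEdgeSet n k)

instance : IsProbabilityMeasure (binomialRandom n k p) :=
  Measure.isProbabilityMeasure_map measurable_ofEdgeSet.aemeasurable

lemma ghProb_eq_binomialRandom_real (p : I) (Q : KGraph n k → Prop) :
    ghProb n k p Q = (binomialRandom n k p).real {G | Q G} := by
  rw [binomialRandom, map_measureReal_apply measurable_ofEdgeSet .of_discrete,
    setBernoulli_real_eq_sum_powerset, sum_filter]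
  refine sum_congr rfl fun E hE ↦ ?_
  have hcard : ∀ e ∈ E, #e = k := fun e he ↦ (mem_powersetCard.1 (mem_powerset.1 hE he)).2
  have hG : ofEdgeSet n k E = ⟨E, hcard⟩ := by
    simp only [ofEdgeSet, mk.injEq]
    ext e
    simpa using hcard e
  rw [dif_pos hcard, Set.mem_preimage, hG]
  rfl

lemma ghProb_mono {p : ℝ} (hp : p ∈ I) {Q R : KGraph n k → Prop} (h : ∀ G, Q G → R G) :
    ghProb n k p Q ≤ ghProb n k p R := by
  lift p to I using hp
  rw [ghProb_eq_binomialRandom_real, ghProb_eq_binomialRandom_real]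
  exact measureReal_mono h

lemma ghProb_le_one {p : ℝ} (hp : p ∈ I) (Q : KGraph n k → Prop) : ghProb n k p Q ≤ 1 := by
  lift p to I using hp
  rw [ghProb_eq_binomialRandom_real]
  exact measureReal_le_one

lemma binomialRandom_real_card_edges_inter {F : Finset (Finset (Fin n))}
    (hF : F ⊆ powersetCard k univ) (P : ℕ → Prop) :
    (binomialRandom n k p).real {G | P #(G.edges ∩ F)}
      = setBer((powersetCard k univ : Finset (Finset (Fin n))), p).real
          {S | P (↑F ∩ S : Set (Finset (Fin n))).ncard} := by
  rw [binomialRandom, map_measureReal_apply measurable_ofEdgeSet .of_discrete]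
  congr 1
  ext S
  have hedges : ((ofEdgeSet n k S).edges ∩ F : Set (Finset (Fin n))) = ↑F ∩ S := by
    ext e
    have := @hF e
    simp only [ofEdgeSet, coe_filter, Set.mem_inter_iff, Set.mem_ofPred_eq, mem_coe]
    tauto
  rw [Set.mem_preimage, Set.mem_ofPred_eq, Set.mem_ofPred_eq, ← Set.ncard_coe_finset, coe_inter,
    hedges]

end KGraph

/-! ### Typicality in the dense regime -/

/-- The expected number `p * C(n-1,k-1)` of edges of `G^k(n,p)` containing a vertex when `n` and `k`
are positive. In the notation of the theorem it is `d̂ / k`. -/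
noncomputable def meanDegree (n k : ℕ) (p : ℝ) : ℝ := p * (n - 1).choose (k - 1)

/-- The range of parameters in which first neighbourhoods in `G^k(n,p)` are concentrated up to a
factor `1 ± δ`: degrees have relative deviation below `δ`, the edge size is at least logarithmic,
and single neighbourhoods do not exhaust the vertex set. -/
structure DenseRegime (n k : ℕ) (p δ : ℝ) : Prop where
  two_le : 2 ≤ n
  delta_pos : 0 < δ
  delta_le : δ ≤ 1 / 2
  log_le_sq_mul : 32 * Real.log n ≤ δ ^ 2 * meanDegree n k p
  log_le : Real.log n ≤ k
  mul_le : k * meanDegree n k p ≤ n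

namespace DenseRegime

variable {n k : ℕ} {p δ : ℝ}

lemma log_gt (h : DenseRegime n k p δ) : 0.6931 < Real.log n := by
  have : Real.log 2 ≤ Real.log n := Real.log_le_log two_pos (by exact_mod_cast h.two_le)
  linarith [Real.log_two_gt_d9]

lemma four_le_delta_mul (h : DenseRegime n k p δ) : 4 ≤ δ * meanDegree n k p := by
  nlinarith [h.log_gt, h.delta_pos, h.delta_le, h.log_le_sq_mul]

lemma eight_le_meanDegree (h : DenseRegime n k p δ) : 8 ≤ meanDegree n k p := by
  nlinarith [h.four_le_delta_mul, h.delta_pos, h.delta_le]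

lemma two_le_edgeSize (h : DenseRegime n k p δ) : 2 ≤ k := by
  have hk : 1 ≤ k := by
    have : (0 : ℝ) < k := by linarith [h.log_gt, h.log_le]
    exact_mod_cast this
  have hn : (8 : ℝ) ≤ n := by
    have : (1 : ℝ) ≤ k := by exact_mod_cast hk
    nlinarith [h.mul_le, h.eight_le_meanDegree]
  have hlog : 3 * Real.log 2 ≤ Real.log n := by
    rw [← Real.log_rpow two_pos]
    exact Real.log_le_log (by positivity) (by norm_num [hn])
  have : (2 : ℝ) ≤ k := by linarith [Real.log_two_gt_d9, h.log_le]
  exact_mod_cast this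

lemma edgeSize_le (h : DenseRegime n k p δ) : k ≤ n := by
  by_contra! hnk
  have hd := h.eight_le_meanDegree
  rw [meanDegree, Nat.choose_eq_zero_of_lt (by have := h.two_le; omega)] at hd
  norm_num at hd

lemma prob_mem_unitInterval (h : DenseRegime n k p δ) : p ∈ I := by
  have hchoose : (0 : ℝ) ≤ (n - 1).choose (k - 1) := Nat.cast_nonneg _
  have hd := h.eight_le_meanDegree
  have hn : (2 : ℝ) ≤ n := by exact_mod_cast h.two_le
  have hcount : (n : ℝ) ≤ k * (n - 1).choose (k - 1) := by
    exact_mod_cast le_mul_choose_sub_one h.two_le_edgeSize h.edgeSize_le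
  have hmul := h.mul_le
  rw [meanDegree] at hd hmul
  constructor
  · by_contra! hp
    linarith [mul_nonpos_of_nonpos_of_nonneg hp.le hchoose]
  · by_contra! hp
    nlinarith

end DenseRegime

namespace DenseRegime

variable {n k : ℕ} {p : I} {δ : ℝ} {A T : Finset (Fin n)}

lemma card_meetingSets_singleton_mul_le (h : DenseRegime n k p δ) (v : Fin n) :
    #(meetingSets k {v} univ) * (p : ℝ) ≤ meanDegree n k p := by
  have hk : k ≠ 0 := by have := h.two_le_edgeSize; omega
  have hcount := card_meetingSets_le hk {v} (univ : Finset (Fin n))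
  rw [card_singleton, one_mul, card_univ, Fintype.card_fin] at hcount
  rw [meanDegree, mul_comm]
  exact mul_le_mul_of_nonneg_left (by exact_mod_cast hcount) p.2.1

lemma real_degree_gt_le (h : DenseRegime n k p δ) (v : Fin n) :
    (KGraph.binomialRandom n k p).real
        {G | (1 + δ) * meanDegree n k p < #(G.edges ∩ meetingSets k {v} univ)}
      ≤ 1 / (n : ℝ) ^ 2 := by
  have hn : (0 : ℝ) < n := by have := h.two_le; positivity
  have hδ := h.delta_pos
  set d := meanDegree n k p
  calc (KGraph.binomialRandom n k p).real {G | (1 + δ) * d < #(G.edges ∩ meetingSets k {v} univ)}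
      ≤ (KGraph.binomialRandom n k p).real
          {G | (1 + δ) * d ≤ #(G.edges ∩ meetingSets k {v} univ)} :=
        measureReal_mono (Set.ofPred_subset_ofPred.2 fun G hG ↦ hG.le)
    _ ≤ Real.exp (-(δ ^ 2 * d / (2 + δ))) :=
        (KGraph.binomialRandom_real_card_edges_inter (meetingSets_subset k {v} univ)
          fun m ↦ (1 + δ) * d ≤ m).trans_le <|
        setBernoulli_real_upper_tail_le (mod_cast meetingSets_subset k {v} univ)
          (h.card_meetingSets_singleton_mul_le v) hδ.le
    _ ≤ Real.exp (-((2 : ℕ) * Real.log n)) := by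
        gcongr
        rw [le_div_iff₀ (by linarith)]
        push_cast
        nlinarith [h.log_le_sq_mul, h.log_gt, h.delta_le]
    _ = 1 / (n : ℝ) ^ 2 := by rw [Real.exp_neg, Real.exp_nat_mul, Real.exp_log hn, one_div]

lemma real_exists_degree_gt_le (h : DenseRegime n k p δ) :
    (KGraph.binomialRandom n k p).real
        {G | ∃ v, (1 + δ) * meanDegree n k p < #(G.edges ∩ meetingSets k {v} univ)}
      ≤ 1 / n := by
  rw [Set.ofPred_exists]
  calc _ ≤ ∑ v : Fin n, (KGraph.binomialRandom n k p).real
          {G | (1 + δ) * meanDegree n k p < #(G.edges ∩ meetingSets k {v} univ)} :=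
        measureReal_iUnion_fintype_le _
    _ ≤ ∑ v : Fin n, 1 / (n : ℝ) ^ 2 := sum_le_sum fun v _ ↦ h.real_degree_gt_le v
    _ = 1 / n := by
        rw [sum_const, card_univ, Fintype.card_fin, nsmul_eq_mul]
        field_simp

lemma card_sub_one_mul_div_le (h : DenseRegime n k p δ) (hA : A.Nonempty)
    (hcard : #A * (k * meanDegree n k p) ≤ n) :
    ((#A - 1 : ℕ) * (k - 1 : ℕ) / (n - 1 : ℕ) : ℝ) ≤ δ / 4 := by
  have hk : 1 ≤ k := one_le_two.trans h.two_le_edgeSize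
  have hk' : (1 : ℝ) ≤ k := by exact_mod_cast hk
  have hkn : (k : ℝ) ≤ n := by exact_mod_cast h.edgeSize_le
  have hn : (2 : ℝ) ≤ n := by exact_mod_cast h.two_le
  calc ((#A - 1 : ℕ) * (k - 1 : ℕ) / (n - 1 : ℕ) : ℝ) = (#A - 1) * ((k - 1) / (n - 1)) := by
        rw [Nat.cast_pred hA.card_pos, Nat.cast_pred hk, Nat.cast_pred (two_pos.trans_le h.two_le),
          mul_div_assoc]
    _ ≤ #A * (k / n) := by
        refine mul_le_mul (by linarith) ?_ (div_nonneg (by linarith) (by linarith))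
          (Nat.cast_nonneg _)
        rw [div_le_div_iff₀ (by linarith) (by linarith)]
        linarith
    _ ≤ δ / 4 := by
        rw [mul_div_assoc', div_le_iff₀ (by linarith)]
        have hδd := mul_le_mul_of_nonneg_left h.four_le_delta_mul
          (show (0 : ℝ) ≤ #A * k by positivity)
        have := mul_le_mul_of_nonneg_left hcard h.delta_pos.le
        linarith

lemma le_card_meetingSets_univ_mul (h : DenseRegime n k p δ) (hA : A.Nonempty)
    (hcard : #A * (k * meanDegree n k p) ≤ n) :
    (1 - δ / 4) * (#A * meanDegree n k p) ≤ #(meetingSets k A univ) * (p : ℝ) := by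
  set d := meanDegree n k p with hd
  have hk : 1 ≤ k := one_le_two.trans h.two_le_edgeSize
  have hAn : #A ≤ n := by simpa using card_le_univ A
  have hfrac := h.card_sub_one_mul_div_le hA hcard
  have hdrop : (1 - δ / 4) * (n - 1).choose (k - 1) ≤ (n - #A).choose (k - 1) := by
    have := one_sub_mul_choose_le (Nat.sub_le_sub_right hAn 1) (k - 1)
    rw [Nat.sub_sub_sub_cancel_right hA.card_pos] at this
    refine le_trans ?_ this
    gcongr
  have hcount := le_card_meetingSets_univ (Nat.one_le_iff_ne_zero.1 hk) A
  rw [Fintype.card_fin] at hcount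
  calc (1 - δ / 4) * (#A * d) = #A * ((1 - δ / 4) * (n - 1).choose (k - 1)) * p := by
        rw [hd, meanDegree]; ring
    _ ≤ #A * (n - #A).choose (k - 1) * p := by gcongr; exact p.2.1
    _ ≤ #(meetingSets k A univ) * p := by gcongr; exacts [p.2.1, mod_cast hcount]

lemma real_meeting_lt_le (h : DenseRegime n k p δ) (hA : A.Nonempty)
    (hcard : #A * (k * meanDegree n k p) ≤ n) :
    (KGraph.binomialRandom n k p).real
        {G | #(G.edges ∩ meetingSets k A univ) < (1 - δ) * (#A * meanDegree n k p)}
      ≤ Real.exp (-(3 * #A * Real.log n)) := by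
  have hδ := h.delta_pos
  have hδ' := h.delta_le
  set d := meanDegree n k p
  have hAd : 0 ≤ #A * d := by have := h.eight_le_meanDegree; positivity
  calc (KGraph.binomialRandom n k p).real
          {G | #(G.edges ∩ meetingSets k A univ) < (1 - δ) * (#A * d)}
      ≤ (KGraph.binomialRandom n k p).real
          {G | #(G.edges ∩ meetingSets k A univ) ≤ (1 - δ / 2) * ((1 - δ / 4) * (#A * d))} := by
        refine measureReal_mono (Set.ofPred_subset_ofPred.2 fun G hG ↦ hG.le.trans ?_)
        rw [← mul_assoc (1 - δ / 2)]
        exact mul_le_mul_of_nonneg_right (by nlinarith) hAd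
    _ ≤ Real.exp (-((δ / 2) ^ 2 * ((1 - δ / 4) * (#A * d)) / 2)) :=
        (KGraph.binomialRandom_real_card_edges_inter (meetingSets_subset k A univ)
          fun m ↦ (m : ℝ) ≤ (1 - δ / 2) * ((1 - δ / 4) * (#A * d))).trans_le <|
        setBernoulli_real_lower_tail_le (mod_cast meetingSets_subset k A univ)
          (mul_nonneg (by linarith) hAd) (h.le_card_meetingSets_univ_mul hA hcard) (by positivity)
    _ ≤ Real.exp (-(3 * #A * Real.log n)) := by
        gcongr
        have h₁ : 32 * #A * Real.log n ≤ δ ^ 2 * (#A * d) := by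
          nlinarith [mul_le_mul_of_nonneg_left h.log_le_sq_mul (Nat.cast_nonneg (α := ℝ) #A)]
        have h₂ : (0 : ℝ) ≤ #A * Real.log n := by have := h.log_gt; positivity
        nlinarith [mul_nonneg (sq_nonneg δ) hAd]

lemma card_meetingSets_mul_le (h : DenseRegime n k p δ) (hT : T.Nonempty) (A : Finset (Fin n)) :
    #(meetingSets k A T) * (p : ℝ) ≤ #A * meanDegree n k p / (n / #T : ℝ) ^ (k - 1) := by
  have hk : k ≠ 0 := by have := h.two_le_edgeSize; omega
  have ht : 0 < #T := hT.card_pos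
  have hTn : #T ≤ n := by simpa using card_le_univ T
  have hn : (0 : ℝ) < n := by exact_mod_cast ht.trans_le hTn
  have hratio : ((#T - 1).choose (k - 1) : ℝ) * n ^ (k - 1)
      ≤ (n - 1).choose (k - 1) * #T ^ (k - 1) := by
    have := choose_mul_add_pow_le (Nat.sub_le_sub_right hTn 1) 1 (k - 1)
    rw [Nat.sub_add_cancel ht, Nat.sub_add_cancel (ht.trans_le hTn)] at this
    exact_mod_cast this
  rw [le_div_iff₀ (by positivity), div_pow, mul_div_assoc', div_le_iff₀ (by positivity)]
  calc #(meetingSets k A T) * (p : ℝ) * n ^ (k - 1)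
      ≤ (#A * (#T - 1).choose (k - 1)) * p * n ^ (k - 1) := by
        gcongr
        · exact p.2.1
        · exact_mod_cast card_meetingSets_le hk A T
    _ = #A * p * ((#T - 1).choose (k - 1) * n ^ (k - 1)) := by ring
    _ ≤ #A * p * ((n - 1).choose (k - 1) * #T ^ (k - 1)) := by
        gcongr
        exact mul_nonneg (Nat.cast_nonneg _) p.2.1
    _ = #A * meanDegree n k p * #T ^ (k - 1) := by rw [meanDegree]; ring

lemma real_le_meeting_le (h : DenseRegime n k p δ) (hT : T.Nonempty) (A : Finset (Fin n)) (x : ℝ) :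
    (KGraph.binomialRandom n k p).real {G | x ≤ #(G.edges ∩ meetingSets k A T)}
      ≤ Real.exp (#A * meanDegree n k p - (k - 1) * Real.log (n / #T) * x) := by
  have hk : 1 ≤ k := one_le_two.trans h.two_le_edgeSize
  have ht : (0 : ℝ) < #T := by exact_mod_cast hT.card_pos
  have hTn : (#T : ℝ) ≤ n := by exact_mod_cast (card_le_univ T).trans_eq (Fintype.card_fin n)
  have hratio : 1 ≤ (n / #T : ℝ) := (one_le_div ht).2 hTn
  have hexp : Real.exp ((k - 1 : ℕ) * Real.log (n / #T)) = (n / #T : ℝ) ^ (k - 1) := by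
    rw [Real.exp_nat_mul, Real.exp_log (by positivity)]
  refine ((KGraph.binomialRandom_real_card_edges_inter (meetingSets_subset k A T)
    fun m ↦ x ≤ m).trans_le <| setBernoulli_real_le_ncard_inter_le
      (mod_cast meetingSets_subset k A T) (t := (k - 1 : ℕ) * Real.log (n / #T))
      (mul_nonneg (Nat.cast_nonneg _) (Real.log_nonneg hratio)) x).trans (Real.exp_le_exp.2 ?_)
  rw [hexp, Nat.cast_sub hk, Nat.cast_one]
  refine sub_le_sub_right ?_ _
  have hpow : (0 : ℝ) < (n / #T : ℝ) ^ (k - 1) := by positivity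
  calc #(meetingSets k A T) * (p : ℝ) * ((n / #T : ℝ) ^ (k - 1) - 1)
      ≤ #(meetingSets k A T) * (p : ℝ) * (n / #T : ℝ) ^ (k - 1) := by
        gcongr
        · exact mul_nonneg (Nat.cast_nonneg _) p.2.1
        · linarith
    _ ≤ #A * meanDegree n k p := (le_div_iff₀ hpow).1 (h.card_meetingSets_mul_le hT A)

lemma real_meeting_ge_of_mul_log_le (h : DenseRegime n k p δ) (hA : A.Nonempty) (hT : T.Nonempty)
    (hsmall : #T * Real.log (n / #T)
      ≤ (Real.log (n / #T) - 4) * (k * ((1 - δ) * (#A * meanDegree n k p)))) :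
    (KGraph.binomialRandom n k p).real
        {G | (1 - δ) * (#A * meanDegree n k p) ≤ #(G.edges ∩ meetingSets k A T)}
      ≤ Real.exp (-(4 * #A * Real.log n) - (#T + #T * Real.log (n / #T))) := by
  refine (h.real_le_meeting_le hT A _).trans (Real.exp_le_exp.2 ?_)
  have ha : (0 : ℝ) < #A := by exact_mod_cast hA.card_pos
  have ht : (0 : ℝ) < #T := by exact_mod_cast hT.card_pos
  have hk : (2 : ℝ) ≤ k := by exact_mod_cast h.two_le_edgeSize
  have hl₀ : 0 ≤ Real.log (n / #T) := by
    refine Real.log_nonneg ((one_le_div ht).2 ?_)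
    exact_mod_cast (card_le_univ T).trans_eq (Fintype.card_fin n)
  have hn : (0 : ℝ) < n := by have := h.two_le; positivity
  have hlk : Real.log (n / #T) ≤ k := by
    refine (Real.log_le_log (by positivity) (div_le_self hn.le ?_)).trans h.log_le
    exact_mod_cast hT.card_pos
  have had : 8 * #A ≤ #A * meanDegree n k p := by nlinarith [h.eight_le_meanDegree]
  set l := Real.log (n / #T)
  set m := (1 - δ) * (#A * meanDegree n k p) with hm
  have hm₂ : #A * meanDegree n k p ≤ 2 * m := by rw [hm]; nlinarith [h.delta_le]
  have hm₀ : 0 < m := by linarith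
  -- The `4` in `hsmall` pays for one copy of `k * m` per term of lower order in the exponent.
  have hmean : #A * meanDegree n k p ≤ k * m := hm₂.trans (by gcongr)
  have hlog : 4 * #A * Real.log n ≤ k * m := by
    calc 4 * #A * Real.log n ≤ m * k := by
          gcongr
          · linarith
          · exact h.log_le
      _ = k * m := mul_comm _ _
  have hTkm : #T ≤ k * m := by
    have hkm : 0 < k * m := by positivity
    have hl : 4 ≤ l := by nlinarith [mul_nonneg ht.le hl₀, hkm]
    nlinarith
  have hlm : l * m ≤ k * m := by gcongr
  linarith

lemma exp_neg_mul_log_le (h : DenseRegime n k p δ) (hA : A.Nonempty) (c : ℕ) :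
    Real.exp (-((c + 1) * #A * Real.log n)) ≤ 1 / (n ^ c * n.choose #A) := by
  have hn : 1 ≤ n := one_le_two.trans h.two_le
  have hchoose : 0 < n.choose #A := Nat.choose_pos (by simpa using card_le_univ A)
  have hpow : n ^ c * n.choose #A ≤ n ^ ((c + 1) * #A) := by
    calc n ^ c * n.choose #A ≤ n ^ (c * #A) * n ^ #A :=
          Nat.mul_le_mul (Nat.pow_le_pow_right hn (Nat.le_mul_of_pos_right c hA.card_pos))
            (Nat.choose_le_pow n #A)
      _ = n ^ ((c + 1) * #A) := by rw [← pow_add, add_one_mul]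
  calc Real.exp (-((c + 1) * #A * Real.log n)) = 1 / (n : ℝ) ^ ((c + 1) * #A) := by
        have hcast : ((c + 1) * #A : ℝ) = ((c + 1) * #A : ℕ) := by push_cast; rfl
        rw [Real.exp_neg, hcast, Real.exp_nat_mul, Real.exp_log (by positivity), one_div]
    _ ≤ 1 / (n ^ c * n.choose #A) := one_div_le_one_div_of_le (by positivity) (mod_cast hpow)

lemma real_exists_meeting_lt_le (h : DenseRegime n k p δ) :
    (KGraph.binomialRandom n k p).real
        {G | ∃ A : Finset (Fin n), A.Nonempty ∧ #A * (k * meanDegree n k p) ≤ n ∧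
          #(G.edges ∩ meetingSets k A univ) < (1 - δ) * (#A * meanDegree n k p)}
      ≤ 1 / n := by
  let B (A : Finset (Fin n)) : Set (KGraph n k) := {G | #A * (k * meanDegree n k p) ≤ n ∧
    #(G.edges ∩ meetingSets k A univ) < (1 - δ) * (#A * meanDegree n k p)}
  refine measureReal_exists_nonempty_le (B := B) (by positivity) fun A hA ↦ ?_
  rw [Fintype.card_fin]
  by_cases hcard : #A * (k * meanDegree n k p) ≤ n
  · simp only [B, hcard, true_and]
    calc _ ≤ Real.exp (-(3 * #A * Real.log n)) := h.real_meeting_lt_le hA hcard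
      _ = Real.exp (-(((2 : ℕ) + 1) * #A * Real.log n)) := by norm_num
      _ ≤ 1 / (n ^ 2 * n.choose #A) := h.exp_neg_mul_log_le hA 2
      _ = 1 / n / (n * n.choose #A) := by rw [div_div, ← mul_assoc, sq]
  · simp only [B, hcard, false_and, Set.ofPred_false, measureReal_empty]
    positivity

lemma real_exists_meeting_ge_le (h : DenseRegime n k p δ) :
    (KGraph.binomialRandom n k p).real
        {G | ∃ A : Finset (Fin n), A.Nonempty ∧ ∃ T : Finset (Fin n), T.Nonempty ∧
          #T * Real.log (n / #T)
            ≤ (Real.log (n / #T) - 4) * (k * ((1 - δ) * (#A * meanDegree n k p))) ∧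
          (1 - δ) * (#A * meanDegree n k p) ≤ #(G.edges ∩ meetingSets k A T)}
      ≤ 1 / n := by
  let small (A T : Finset (Fin n)) : Prop := #T * Real.log (n / #T)
    ≤ (Real.log (n / #T) - 4) * (k * ((1 - δ) * (#A * meanDegree n k p)))
  let B (A T : Finset (Fin n)) : Set (KGraph n k) :=
    {G | small A T ∧ (1 - δ) * (#A * meanDegree n k p) ≤ #(G.edges ∩ meetingSets k A T)}
  refine measureReal_exists_nonempty_le (c := 1 / n)
    (B := fun A ↦ {G | ∃ T, T.Nonempty ∧ G ∈ B A T}) (by positivity) fun A hA ↦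
      measureReal_exists_nonempty_le (B := B A) (by positivity) fun T hT ↦ ?_
  rw [Fintype.card_fin]
  by_cases hsmall : small A T
  · simp only [B, hsmall, true_and]
    calc _ ≤ Real.exp (-(4 * #A * Real.log n) - (#T + #T * Real.log (n / #T))) :=
          h.real_meeting_ge_of_mul_log_le hA hT hsmall
      _ = Real.exp (-(((3 : ℕ) + 1) * #A * Real.log n))
            / Real.exp (#T + #T * Real.log (n / #T)) := by rw [Real.exp_sub]; norm_num
      _ ≤ 1 / (n ^ 3 * n.choose #A) / n.choose #T := by
          have : 0 < n.choose #T := Nat.choose_pos (by simpa using card_le_univ T)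
          gcongr
          · exact h.exp_neg_mul_log_le hA 3
          · exact choose_le_exp n #T
      _ = 1 / n / (n * n.choose #A) / (n * n.choose #T) := by
          simp only [div_div]
          ring
  · simp only [B, hsmall, false_and, Set.ofPred_false, measureReal_empty]
    positivity

theorem one_sub_le_real_isTypical (h : DenseRegime n k p δ) :
    1 - 3 / n ≤ (KGraph.binomialRandom n k p).real {G | G.IsTypical δ (meanDegree n k p)} := by
  set d := meanDegree n k p
  set E₁ : Set (KGraph n k) := {G | ∃ v, (1 + δ) * d < #(G.edges ∩ meetingSets k {v} univ)}
  set E₂ : Set (KGraph n k) := {G | ∃ A : Finset (Fin n), A.Nonempty ∧ #A * (k * d) ≤ n ∧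
    #(G.edges ∩ meetingSets k A univ) < (1 - δ) * (#A * d)}
  set E₃ : Set (KGraph n k) := {G | ∃ A : Finset (Fin n), A.Nonempty ∧
    ∃ T : Finset (Fin n), T.Nonempty ∧
      #T * Real.log (n / #T) ≤ (Real.log (n / #T) - 4) * (k * ((1 - δ) * (#A * d))) ∧
      (1 - δ) * (#A * d) ≤ #(G.edges ∩ meetingSets k A T)}
  have hcompl : {G : KGraph n k | G.IsTypical δ d}ᶜ ⊆ E₁ ∪ E₂ ∪ E₃ := by
    refine Set.compl_subset_comm.1 fun G hG ↦ ?_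
    simp only [E₁, E₂, E₃, Set.mem_compl_iff, Set.mem_union, Set.mem_ofPred_eq, not_or, not_exists,
      not_and, not_lt, not_le] at hG
    exact ⟨hG.1.1, hG.1.2, fun A T hA hT ↦ hG.2 A hA T hT⟩
  have hfail : (KGraph.binomialRandom n k p).real (E₁ ∪ E₂ ∪ E₃) ≤ 1 / n + 1 / n + 1 / n :=
    (measureReal_union_le _ _).trans (add_le_add ((measureReal_union_le _ _).trans (add_le_add
      h.real_exists_degree_gt_le h.real_exists_meeting_lt_le)) h.real_exists_meeting_ge_le)
  have hle := (measureReal_mono hcompl).trans hfail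
  rw [probReal_compl_eq_one_sub .of_discrete] at hle
  rw [← show (1 / n + 1 / n + 1 / n : ℝ) = 3 / n by ring]
  linarith

end DenseRegime

/-! ### Concentration of first neighbourhoods -/

theorem one_sub_le_ghProb_vNhd_one {n k : ℕ} {p δ : ℝ} (h : DenseRegime n k p δ) :
    1 - 3 / n ≤ ghProb n k p (fun G ↦ ∀ A : Finset (Fin n), ∀ ε : ℝ, 0 < ε →
      (#A * (k * meanDegree n k p) / n) ^ ε ≤ (2 : ℝ) ^ (-6 : ℤ) →
        (1 - ε) * (1 - δ) * #A * (k * meanDegree n k p) ≤ (G.vNhd ↑A 1).ncard ∧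
          (G.vNhd ↑A 1).ncard ≤ (1 + δ) * #A * (k * meanDegree n k p)) := by
  lift p to I using h.prob_mem_unitInterval
  rw [KGraph.ghProb_eq_binomialRandom_real]
  refine h.one_sub_le_real_isTypical.trans (measureReal_mono fun G hG A ε hε hA ↦ ?_)
  have hk : 1 ≤ k := one_le_two.trans h.two_le_edgeSize
  have hδ := h.delta_pos
  have hd := h.eight_le_meanDegree
  exact ⟨hG.le_ncard_vNhd_one hδ.le (by linarith [h.delta_le]) hk (by linarith) hε hA,
    hG.ncard_vNhd_one_le hk (by nlinarith) A⟩

lemma tendsto_ghProb_of_imp {k : ℕ → ℕ} {p : ℕ → ℝ} {Q R : ∀ n, KGraph n (k n) → Prop}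
    (hp : ∀ᶠ n in atTop, p n ∈ I) (hQR : ∀ n G, Q n G → R n G)
    (hQ : Tendsto (fun n ↦ ghProb n (k n) (p n) (Q n)) atTop (nhds 1)) :
    Tendsto (fun n ↦ ghProb n (k n) (p n) (R n)) atTop (nhds 1) := by
  refine tendsto_of_tendsto_of_tendsto_of_le_of_le' hQ tendsto_const_nhds ?_ ?_
  · filter_upwards [hp] with n hn using KGraph.ghProb_mono hn (hQR n)
  · filter_upwards [hp] with n hn using KGraph.ghProb_le_one hn _

theorem whp_Gknp_vertex_neighbourhood_concentration_general (k : ℕ → ℕ) (p δ : ℕ → ℝ)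
    (h : ∀ᶠ n in atTop, DenseRegime n (k n) (p n) (δ n)) :
    Tendsto
      (fun n ↦ ghProb n (k n) (p n) fun G ↦ ∀ A : Finset (Fin n), ∀ ε : ℝ, 0 < ε →
        (#A * (p n * k n * (n - 1).choose (k n - 1)) / n) ^ ε ≤ (2 : ℝ) ^ (-6 : ℤ) →
          (1 - ε) * (1 - δ n) * #A * (p n * k n * (n - 1).choose (k n - 1))
            ≤ (G.vNhd ↑A 1).ncard ∧
          (G.vNhd ↑A 1).ncard ≤ (1 + δ n) * #A * (p n * k n * (n - 1).choose (k n - 1)))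
      atTop (nhds 1) := by
  have hmul (n : ℕ) : p n * k n * (n - 1).choose (k n - 1) = k n * meanDegree n (k n) (p n) := by
    rw [meanDegree]; ring
  simp only [hmul]
  have hlim : Tendsto (fun n : ℕ ↦ 1 - 3 / (n : ℝ)) atTop (nhds 1) := by
    simpa using (tendsto_const_div_atTop_nhds_zero_nat (3 : ℝ)).const_sub 1
  refine tendsto_of_tendsto_of_tendsto_of_le_of_le' hlim tendsto_const_nhds ?_ ?_
  · filter_upwards [h] with n h using one_sub_le_ghProb_vNhd_one h
  · filter_upwards [h] with n h using KGraph.ghProb_le_one h.prob_mem_unitInterval _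

lemma eventually_sqrt_log_div_mem_Ioc :
    ∀ᶠ x : ℝ in atTop, √(Real.log x) / x ∈ Set.Ioc 0 (1 / 2) := by
  filter_upwards [eventually_gt_atTop 1] with x hx
  have hpos := Real.log_pos hx
  refine ⟨by positivity, ?_⟩
  rw [div_le_iff₀ (by linarith), Real.sqrt_le_left (by linarith)]
  nlinarith [Real.log_le_sub_one_of_pos (show 0 < x by linarith), sq_nonneg (x - 2)]

lemma eventually_mul_le_sq_sqrt_log_div_mul {L d : ℕ → ℝ} (hL : Tendsto L atTop atTop)
    (h : Tendsto (fun n ↦ d n / L n ^ 3) atTop atTop) (c : ℝ) :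
    ∀ᶠ n in atTop, c * L n ≤ (√(Real.log (L n)) / L n) ^ 2 * d n := by
  filter_upwards [h.eventually_ge_atTop c, h.eventually_ge_atTop 0, hL.eventually_gt_atTop 0,
    (Real.tendsto_log_atTop.comp hL).eventually_ge_atTop 1]
    with n hc h₀ hL₀ (hlog : 1 ≤ Real.log (L n))
  calc c * L n ≤ 1 * (d n / L n ^ 3) * L n := by rw [one_mul]; gcongr
    _ ≤ Real.log (L n) * (d n / L n ^ 3) * L n := by gcongr
    _ = (√(Real.log (L n)) / L n) ^ 2 * d n := by
        rw [div_pow, Real.sq_sqrt (zero_le_one.trans hlog)]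
        field_simp

lemma eventually_denseRegime {k : ℕ → ℕ} {p : ℕ → ℝ}
    (hd : Tendsto (fun n ↦ p n * (n - 1).choose (k n - 1) / Real.log n ^ 3) atTop atTop)
    (hk : Tendsto (fun n ↦ k n / Real.log n) atTop atTop)
    (hdn : ∀ᶠ n : ℕ in atTop, p n * k n * (n - 1).choose (k n - 1) ≤ n) :
    ∀ᶠ n in atTop, DenseRegime n (k n) (p n) (√(Real.log (Real.log n)) / Real.log n) := by
  have hlog : Tendsto (fun n : ℕ ↦ Real.log n) atTop atTop :=
    Real.tendsto_log_atTop.comp tendsto_natCast_atTop_atTop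
  filter_upwards [eventually_ge_atTop 2, hlog.eventually eventually_sqrt_log_div_mem_Ioc,
    eventually_mul_le_sq_sqrt_log_div_mul hlog hd 32, hk.eventually_ge_atTop 1,
    hlog.eventually_gt_atTop 0, hdn] with n hn hδ hδd hkn hlogn hkd
  refine ⟨hn, hδ.1, hδ.2, hδd, (one_le_div hlogn).1 hkn, le_trans (le_of_eq ?_) hkd⟩
  rw [meanDegree]
  ring

/-- whp first vertex-neighbourhoods of small sets in `G^k(n,p)` are concentrated. -/
theorem whp_Gknp_vertex_neighbourhood_concentration (k : ℕ → ℕ) (p : ℕ → ℝ)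
    (hk2 : ∀ n, 2 ≤ k n) (hp : ∀ n, 0 < p n)
    (hd : Filter.Tendsto
      (fun n => p n * (((n - 1).choose (k n - 1) : ℕ) : ℝ) / Real.log n ^ 3)
      Filter.atTop Filter.atTop)
    (hk : Filter.Tendsto (fun n => (k n : ℝ) / Real.log n) Filter.atTop Filter.atTop)
    (hdn : ∀ᶠ n in Filter.atTop,
      p n * k n * (((n - 1).choose (k n - 1) : ℕ) : ℝ) ≤ (n : ℝ)) :
    Filter.Tendsto
      (fun n => ghProb n (k n) (p n) (fun G =>
        ∀ A : Finset (Fin n), ∀ ε : ℝ, 0 < ε → ε ≤ 1 / 2 →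
          ((A.card : ℝ) * (p n * k n * (((n - 1).choose (k n - 1) : ℕ) : ℝ)) / n) ^ ε
              ≤ (2 : ℝ) ^ (-6 : ℤ) →
          (1 - ε) * (1 - Real.sqrt (Real.log (Real.log n)) / Real.log n) * A.card *
              (p n * k n * (((n - 1).choose (k n - 1) : ℕ) : ℝ))
            ≤ ((G.vNhd ↑A 1).ncard : ℝ) ∧
          ((G.vNhd ↑A 1).ncard : ℝ) ≤
            (1 + Real.sqrt (Real.log (Real.log n)) / Real.log n) * A.card *
              (p n * k n * (((n - 1).choose (k n - 1) : ℕ) : ℝ))))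
      Filter.atTop (nhds 1) := by
  have h := eventually_denseRegime hd hk hdn
  exact tendsto_ghProb_of_imp (h.mono fun _ hn ↦ hn.prob_mem_unitInterval)
    (fun _ _ hG A ε hε _ hA ↦ hG A ε hε hA)
    (whp_Gknp_vertex_neighbourhood_concentration_general k p _ h)
end
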